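/- arXiv:2201.01043 — 2 statements merged into one kernel-verified Lean document; each statement's English description precedes it below -/
import Mathlib

section
/- Let k and m be non-negative integers with m ≤ k+1, and let G be a connected K_{1,4}-free simple graph of order n. If every independent set of m+2 vertices in G has degree sum at least n−k, then G has a spanning tree T with |L(T)| + |B(T)| ≤ m+k+2, i.e., with at most m+k+2 leaves and branch vertices in total. -/
open SimpleGraph Finset List

open scoped Classical

variable {V : Type*}

/-- `G` contains no induced copy of `K_{1,4}` (a star with four edges). -/
def K14Free (G : SimpleGraph V) : Prop :=
  ¬ ∃ c a b d e : V, a ≠ b ∧ a ≠ d ∧ a ≠ e ∧ b ≠ d ∧ b ≠ e ∧ d ≠ e ∧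
    G.Adj c a ∧ G.Adj c b ∧ G.Adj c d ∧ G.Adj c e ∧
    ¬G.Adj a b ∧ ¬G.Adj a d ∧ ¬G.Adj a e ∧ ¬G.Adj b d ∧ ¬G.Adj b e ∧ ¬G.Adj d e

/-- `s` is an independent set of vertices of `G`. -/
def IsIndepFinset (G : SimpleGraph V) (s : Finset V) : Prop :=
  ∀ u ∈ s, ∀ v ∈ s, u ≠ v → ¬G.Adj u v

/-- The set `L(T)` of leaves (vertices of degree one) of `T`. -/
noncomputable def leafSet [Fintype V] (T : SimpleGraph V) : Finset V :=
  Finset.univ.filter fun v => T.degree v = 1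

/-- The set `B(T)` of branch vertices (vertices of degree at least three) of `T`. -/
noncomputable def branchSet [Fintype V] (T : SimpleGraph V) : Finset V :=
  Finset.univ.filter fun v => 3 ≤ T.degree v

/-- `v` is an oblique neighbor of the edge `e` with respect to the (spanning) tree `T` of `G`:
`e = s(a,b)` where `b` is the endpoint of `e` farthest from `v` in `T`, and `v b ∈ E(G)`. -/
def IsObliqueNbr (G T : SimpleGraph V) (e : Sym2 V) (v : V) : Prop :=
  ∃ a b : V, e = s(a, b) ∧ T.dist v a < T.dist v b ∧ G.Adj v b

/-- The number of vertices of the reducible stem `R_Stem(T)` of `T`: a vertex `v` survives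
iff for every leaf `x` of `T` the (unique) path of `T` from `x` to `v` contains a branch
vertex (so exactly the vertices not lying strictly before the first branch vertex on the
path leaving some leaf). -/
noncomputable def rstemCard [Fintype V] (T : SimpleGraph V) : ℕ :=
  {v : V | ∀ x : V, T.degree x = 1 → ∀ p : T.Walk x v, p.IsPath →
    ∃ w ∈ p.support, 3 ≤ T.degree w}.ncard

/-!
Suppose that every spanning tree has at least `m + k + 3` leaves and branch vertices. Choose a
spanning tree `T` with the fewest leaves, then with the fewest branch vertices, then with the
largest total distance between branch vertices. Since a tree has at least two more leaves than
branch vertices and `m ≤ k + 1`, there are at least three leaves; minimality then makes the leaves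
pairwise nonadjacent in `G`, and at least `m + 2` of them are available for the degree condition.

Send each pair of a leaf `v` and a `G`-neighbor `u` of `v` to the last edge of the path of `T` from
`v` to `u`. Edge exchanges and the absence of induced `K_{1,4}` show that distinct pairs go to
distinct edges. Moreover, if `c` is a fixed branch vertex, every other branch vertex `w` has an edge
of its own that is not of this kind: the one towards `c` or, if that one is hit, an edge to a
neighbor of degree at most two. Such a neighbor exists, because the neighbors of `w` away from `c`
then form a clique, and if they were all branch vertices, `w` could be merged into one of them; the
largest total distance excludes that the leaf hitting the edge is adjacent to both its ends.
As `T` has `n - 1` edges, the degrees in `G` of the leaves and the number of branch vertices add up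
to at most `n`, whereas the degree condition on `m + 2` leaves makes this sum at least `n + 1`.
-/

section Sides

variable {T : SimpleGraph V} {a b p q u v w x y : V}

/-- `v` lies on the `a`-side of the edge `a w` of the tree `T`, that is, in the component of `a`
once the edge is removed. It is encoded by distances, see `onSide_iff_reachable`. -/
def OnSide (T : SimpleGraph V) (a w v : V) : Prop :=
  T.dist v a < T.dist v w

lemma onSide_left (h : T.Adj a w) : OnSide T a w a := by
  simp [OnSide, dist_eq_one_iff_adj.2 h]

lemma OnSide.not_onSide (h : OnSide T a w v) : ¬ OnSide T w a v :=
  Nat.lt_asymm h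

lemma OnSide.ne (hx : OnSide T a w x) (hy : OnSide T w a y) : x ≠ y := by
  rintro rfl
  exact hx.not_onSide hy

lemma onSide_or_onSide (hT : T.IsTree) (h : T.Adj a w) (v : V) :
    OnSide T a w v ∨ OnSide T w a v :=
  lt_or_gt_of_ne (hT.dist_ne_of_adj v h)

lemma OnSide.dist_eq_add_one (hv : OnSide T a w v) (hT : T.IsTree) (h : T.Adj a w) :
    T.dist v w = T.dist v a + 1 := by
  have := hT.dist_eq_dist_add_one_of_adj v h
  have : T.dist v a < T.dist v w := hv
  omega

lemma exists_adj_onSide (hT : T.Connected) (h : v ≠ w) : ∃ a, T.Adj a w ∧ OnSide T a w v := by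
  obtain ⟨p, -, hp⟩ := hT.exists_path_of_dist v w
  have hnil : ¬ p.Nil := fun hn => h hn.eq
  refine ⟨p.penultimate, p.adj_penultimate hnil, ?_⟩
  have hle := dist_le p.dropLast
  have hlen : p.dropLast.length + 1 = p.length := Walk.length_dropLast_add_one hnil
  exact (by omega : T.dist v p.penultimate < T.dist v w)

lemma OnSide.unique (hva : OnSide T a w v) (hvb : OnSide T b w v) (hT : T.IsTree)
    (ha : T.Adj a w) (hb : T.Adj b w) : a = b := by
  obtain ⟨p, hp⟩ := hT.connected.exists_walk_length_eq_dist v a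
  obtain ⟨q, hq⟩ := hT.connected.exists_walk_length_eq_dist v b
  have hpath : (p.concat ha).IsPath := Walk.isPath_of_length_eq_dist _ <| by
    rw [Walk.length_concat, hp, hva.dist_eq_add_one hT ha]
  have hpath' : (q.concat hb).IsPath := Walk.isPath_of_length_eq_dist _ <| by
    rw [Walk.length_concat, hq, hvb.dist_eq_add_one hT hb]
  have heq : p.concat ha = q.concat hb := (hT.existsUnique_path v w).unique hpath hpath'
  simpa using congrArg Walk.penultimate heq

lemma OnSide.of_ne (hv : OnSide T a w v) (hT : T.IsTree) (ha : T.Adj a w) (hy : T.Adj w y)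
    (hne : y ≠ a) : OnSide T w y v :=
  (onSide_or_onSide hT hy v).resolve_right fun h => hne (h.unique hv hT hy.symm ha)

lemma OnSide.reachable (hv : OnSide T a w v) (hT : T.Connected) :
    (T.deleteEdges {s(a, w)}).Reachable v a := by
  obtain ⟨p, hp⟩ := hT.exists_walk_length_eq_dist v a
  refine ⟨p.toDeleteEdge s(a, w) fun he => ?_⟩
  have hw : w ∈ p.support := Walk.snd_mem_support_of_mem_edges p he
  have hlt : T.dist v a < T.dist v w := hv
  have := dist_le (p.takeUntil w hw)
  have := Walk.length_takeUntil_le_length p hw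
  omega

lemma OnSide.reachable_symm (hv : OnSide T w a v) (hT : T.Connected) :
    (T.deleteEdges {s(a, w)}).Reachable v w :=
  Sym2.eq_swap (a := w) (b := a) ▸ hv.reachable hT

lemma OnSide.not_reachable (hx : OnSide T a w x) (hy : OnSide T w a y) (hT : T.IsTree)
    (h : T.Adj a w) : ¬ (T.deleteEdges {s(a, w)}).Reachable x y := fun hxy =>
  isBridge_iff.1 (isAcyclic_iff_forall_adj_isBridge.1 hT.isAcyclic h) <|
    (hx.reachable hT.connected).symm.trans (hxy.trans (hy.reachable_symm hT.connected))

lemma onSide_iff_reachable (hT : T.IsTree) (h : T.Adj a w) :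
    OnSide T a w v ↔ (T.deleteEdges {s(a, w)}).Reachable v a := by
  refine ⟨fun hv => hv.reachable hT.connected, fun hr => ?_⟩
  exact (onSide_or_onSide hT h v).resolve_right
    fun hv => (onSide_left h).not_reachable hv hT h hr.symm

lemma OnSide.of_adj (hp : OnSide T a w p) (hT : T.IsTree) (h : T.Adj a w) (hpq : T.Adj p q)
    (hne : s(p, q) ≠ s(a, w)) : OnSide T a w q := by
  rw [onSide_iff_reachable hT h] at hp ⊢
  have hqp : (T.deleteEdges {s(a, w)}).Adj p q := deleteEdges_adj.2 ⟨hpq, hne⟩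
  exact hqp.symm.reachable.trans hp

lemma le_add_dist_of_forall_adj (hT : T.Connected) (f : V → ℕ)
    (hf : ∀ p q, T.Adj p q → f q ≤ f p + 1) (x y : V) : f y ≤ f x + T.dist x y := by
  obtain ⟨p, hp⟩ := hT.exists_walk_length_eq_dist x y
  rw [← hp]
  clear hp
  induction p with
  | nil => simp
  | cons hadj p ih =>
    have := hf _ _ hadj
    rw [Walk.length_cons]
    omega

lemma exists_neighbors_of_dist_add_dist (hT : T.IsTree) (hx : T.dist u x + T.dist v x = T.dist u v)
    (hu : u ≠ x) (hv : v ≠ x) :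
    ∃ p q, T.Adj p x ∧ T.Adj q x ∧ p ≠ q ∧ OnSide T p x u ∧ OnSide T q x v ∧
      T.dist u p + T.dist v p = T.dist u v ∧ T.dist u q + T.dist v q = T.dist u v := by
  obtain ⟨p, hp, hup⟩ := exists_adj_onSide hT.connected hu
  obtain ⟨q, hq, hvq⟩ := exists_adj_onSide hT.connected hv
  have hup' := hup.dist_eq_add_one hT hp
  have hvq' := hvq.dist_eq_add_one hT hq
  have hpq : p ≠ q := by
    rintro rfl
    have := hT.connected.dist_triangle (u := u) (v := p) (w := v)
    rw [T.dist_comm (u := p)] at this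
    omega
  have hvp := (hvq.of_ne hT hq hp.symm hpq).dist_eq_add_one hT hp.symm
  have huq := (hup.of_ne hT hp hq.symm hpq.symm).dist_eq_add_one hT hq.symm
  exact ⟨p, q, hp, hq, hpq, hup, hvq, by omega, by omega⟩

end Sides

section Degrees

variable {T : SimpleGraph V} {a v w x y : V}

lemma eq_of_adj_of_degree_eq_one [Fintype (T.neighborSet a)] (ha : T.degree a = 1)
    (hx : T.Adj a x) (hy : T.Adj a y) : x = y :=
  (degree_eq_one_iff_existsUnique_adj.1 ha).unique hx hy

lemma OnSide.eq_of_degree_eq_one [Fintype (T.neighborSet a)] (hv : OnSide T a w v)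
    (hT : T.Connected) (ha : T.degree a = 1) (h : T.Adj a w) : v = a := by
  by_contra hne
  obtain ⟨b, hb, hvb⟩ := exists_adj_onSide hT hne
  obtain rfl := eq_of_adj_of_degree_eq_one ha hb.symm h
  exact hv.not_onSide hvb

lemma dist_add_dist_of_adj_of_degree_eq_one [Fintype (T.neighborSet x)] (hT : T.IsTree)
    (hx : T.degree x = 1) (hvx : v ≠ x) (hy : T.Adj x y) :
    T.dist x y + T.dist v y = T.dist x v := by
  obtain ⟨r, hr, hvr⟩ := exists_adj_onSide hT.connected hvx
  obtain rfl := eq_of_adj_of_degree_eq_one hx hy hr.symm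
  rw [T.dist_comm (u := x) (v := v), hvr.dist_eq_add_one hT hr, dist_eq_one_iff_adj.2 hy, add_comm]

lemma exists_adj_notMem_of_card_lt_degree [Fintype (T.neighborSet w)] (s : Finset V)
    (hs : s.card < T.degree w) : ∃ y, T.Adj w y ∧ y ∉ s := by
  obtain ⟨y, hy, hys⟩ := Finset.exists_mem_notMem_of_card_lt_card
    (hs.trans_eq (T.card_neighborFinset_eq_degree w).symm)
  exact ⟨y, (T.mem_neighborFinset w y).1 hy, hys⟩

lemma three_le_degree_of_adj [Fintype (T.neighborSet w)] {p q r : V} (hp : T.Adj w p)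
    (hq : T.Adj w q) (hr : T.Adj w r) (hpq : p ≠ q) (hpr : p ≠ r) (hqr : q ≠ r) :
    3 ≤ T.degree w := by
  rw [← card_neighborFinset_eq_degree, ← Finset.card_eq_three.2 ⟨p, q, r, hpq, hpr, hqr, rfl⟩]
  refine Finset.card_le_card fun z hz => ?_
  simp only [Finset.mem_insert, Finset.mem_singleton] at hz
  rw [mem_neighborFinset]
  rcases hz with rfl | rfl | rfl <;> assumption

variable [Fintype V]

/-- A walk from `u` to `x` leaves the path between `u` and `v`, here the set `P`, at a branch
vertex. -/
lemma exists_branch_between_leaves (hT : T.IsTree) {u v x : V} (hu : T.degree u = 1)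
    (hv : T.degree v = 1) (hx : T.degree x = 1) (huv : u ≠ v) (hux : u ≠ x) (hvx : v ≠ x) :
    ∃ z q, 3 ≤ T.degree z ∧ T.Adj z q ∧ OnSide T z q u ∧ OnSide T q z v := by
  let P : Set V := {z | T.dist u z + T.dist v z = T.dist u v}
  have hxP : x ∉ P := fun hxP => by
    obtain ⟨p, q, hp, hq, hpq, -⟩ := exists_neighbors_of_dist_add_dist hT hxP hux hvx
    exact hpq (eq_of_adj_of_degree_eq_one hx hp.symm hq.symm)
  obtain ⟨walk, -⟩ := hT.connected.exists_walk_length_eq_dist u x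
  obtain ⟨⟨⟨z, y⟩, hzy⟩, -, hzP, hyP⟩ := walk.exists_boundary_dart P
    (by simp [P, T.dist_comm]) hxP
  have huz : u ≠ z := by
    rintro rfl
    exact hyP (dist_add_dist_of_adj_of_degree_eq_one hT hu huv.symm hzy)
  have hvz : v ≠ z := by
    rintro rfl
    have := dist_add_dist_of_adj_of_degree_eq_one hT hv huv hzy
    exact hyP (by rw [Set.mem_ofPred_eq, T.dist_comm (u := u) (v := v), ← this, add_comm])
  obtain ⟨p, q, hp, hq, hpq, hup, hvq, hpP, hqP⟩ :=
    exists_neighbors_of_dist_add_dist hT hzP huz hvz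
  refine ⟨z, q, three_le_degree_of_adj hp.symm hq.symm hzy hpq ?_ ?_, hq.symm,
    hup.of_ne hT hp hq.symm hpq.symm, hvq⟩
  · rintro rfl
    exact hyP hpP
  · rintro rfl
    exact hyP hqP

lemma mem_leafSet : v ∈ leafSet T ↔ T.degree v = 1 := by
  simp [leafSet]

lemma mem_branchSet : v ∈ branchSet T ↔ 3 ≤ T.degree v := by
  simp [branchSet]

lemma card_leafSet_add_card_branchSet_le_card (T : SimpleGraph V) :
    (leafSet T).card + (branchSet T).card ≤ Fintype.card V := by
  have hdisj : Disjoint (leafSet T) (branchSet T) := Finset.disjoint_left.2 fun v hl hb => by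
    rw [mem_leafSet] at hl
    rw [mem_branchSet] at hb
    omega
  rw [← Finset.card_union_of_disjoint hdisj]
  exact Finset.card_le_univ _

lemma card_branchSet_add_two_le_card_leafSet [Nontrivial V] (hT : T.IsTree) :
    (branchSet T).card + 2 ≤ (leafSet T).card := by
  have hdeg : ∑ v, (2 + if v ∈ branchSet T then 1 else 0) ≤
      ∑ v, (T.degree v + if v ∈ leafSet T then 1 else 0) := by
    refine Finset.sum_le_sum fun v _ => ?_
    have := hT.connected.preconnected.degree_pos_of_nontrivial v
    simp only [mem_branchSet, mem_leafSet]
    split_ifs <;> omega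
  rw [Finset.sum_add_distrib, Finset.sum_add_distrib, T.sum_degrees_eq_twice_card_edges] at hdeg
  simp only [Finset.sum_const, Finset.card_univ, Finset.sum_ite_mem, Finset.univ_inter,
    smul_eq_mul, mul_one] at hdeg
  have := hT.card_edgeFinset
  omega

end Degrees

section EdgeExchange

variable {G T : SimpleGraph V} {a p q u w x y : V}

/-- The graph `T - a w + x y`, the basic exchange from which all comparison trees are built. -/
def edgeExchange (T : SimpleGraph V) (a w x y : V) : SimpleGraph V :=
  T.deleteEdges {s(a, w)} ⊔ edge x y

lemma edgeExchange_adj :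
    (edgeExchange T a w x y).Adj p q ↔
      (T.Adj p q ∧ s(p, q) ≠ s(a, w)) ∨ (s(x, y) = s(p, q) ∧ p ≠ q) := by
  rw [edgeExchange, sup_adj, deleteEdges_adj, adj_edge, Set.mem_singleton_iff]

lemma edgeExchange_adj_new (h : x ≠ y) : (edgeExchange T a w x y).Adj x y :=
  edgeExchange_adj.2 (Or.inr ⟨rfl, h⟩)

lemma edgeExchange_le (hT : T ≤ G) (hxy : G.Adj x y) : edgeExchange T a w x y ≤ G :=
  sup_le ((deleteEdges_le _).trans hT) ((edge_le_iff _).2 (Or.inr hxy))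

lemma isTree_edgeExchange (hT : T.IsTree) (h : T.Adj a w) (hx : OnSide T a w x)
    (hy : OnSide T w a y) : (edgeExchange T a w x y).IsTree := by
  have hle : T.deleteEdges {s(a, w)} ≤ edgeExchange T a w x y := le_sup_left
  have hxy : (edgeExchange T a w x y).Reachable x y :=
    (edgeExchange_adj_new (hx.ne hy)).reachable
  have hreach : ∀ u, (edgeExchange T a w x y).Reachable u x := fun u => by
    rcases onSide_or_onSide hT h u with hu | hu
    · exact ((hu.reachable hT.connected).trans (hx.reachable hT.connected).symm).mono hle
    · exact (((hu.reachable_symm hT.connected).trans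
        (hy.reachable_symm hT.connected).symm).mono hle).trans hxy.symm
  have : Nonempty V := ⟨a⟩
  exact ⟨⟨fun u v => (hreach u).trans (hreach v).symm⟩,
    IsAcyclic.sup_edge_of_not_reachable (hx.not_reachable hy hT h)
      (hT.isAcyclic.anti (deleteEdges_le _))⟩

lemma OnSide.edgeExchange (hu : OnSide T a w u) (hT : T.IsTree) (h : T.Adj a w)
    (hx : OnSide T a w x) (hy : OnSide T w a y) : OnSide (edgeExchange T a w x y) x y u := by
  rw [onSide_iff_reachable (isTree_edgeExchange hT h hx hy) (edgeExchange_adj_new (hx.ne hy))]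
  refine ((hu.reachable hT.connected).trans (hx.reachable hT.connected).symm).mono ?_
  intro p q hpq
  have hne : s(p, q) ≠ s(x, y) := fun he => by
    refine hx.not_reachable hy hT h (Adj.reachable ?_)
    rwa [← mem_edgeSet, ← he]
  exact deleteEdges_adj.2 ⟨Or.inl hpq, hne⟩

lemma deleteEdges_sup_edge (h : T.Adj a w) : T.deleteEdges {s(a, w)} ⊔ edge a w = T := by
  ext p q
  rw [sup_adj, deleteEdges_adj, adj_edge, Set.mem_singleton_iff, ← mem_edgeSet]
  have : s(a, w) ∈ T.edgeSet := h
  have := T.ne_of_adj (a := p) (b := q)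
  grind [mem_edgeSet]

variable [Fintype V]

lemma degree_sup_edge (hxy : x ≠ y) (h : ¬ T.Adj x y) (u : V) :
    (T ⊔ edge x y).degree u =
      T.degree u + (if u = x then 1 else 0) + (if u = y then 1 else 0) := by
  have hyx : ¬ T.Adj y x := fun hyx => h hyx.symm
  have hnbr : ∀ z, z ∈ (T ⊔ edge x y).neighborFinset u ↔
      z ∈ T.neighborFinset u ∨ (u = x ∧ z = y) ∨ (u = y ∧ z = x) := fun z => by
    rw [mem_neighborFinset, mem_neighborFinset, sup_adj, edge_adj]
    grind
  simp only [← card_neighborFinset_eq_degree]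
  by_cases hux : u = x
  · have : (T ⊔ edge x y).neighborFinset u = insert y (T.neighborFinset u) := by ext z; grind
    rw [this, Finset.card_insert_of_notMem (by simp [hux, h])]
    simp [hux, hxy]
  · by_cases huy : u = y
    · have : (T ⊔ edge x y).neighborFinset u = insert x (T.neighborFinset u) := by ext z; grind
      rw [this, Finset.card_insert_of_notMem (by simp [huy, hyx])]
      simp [huy, hxy.symm]
    · have : (T ⊔ edge x y).neighborFinset u = T.neighborFinset u := by ext z; grind
      simp [this, hux, huy]

lemma degree_edgeExchange (hT : T.IsTree) (h : T.Adj a w) (hx : OnSide T a w x)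
    (hy : OnSide T w a y) (u : V) :
    (edgeExchange T a w x y).degree u + (if u = a then 1 else 0) + (if u = w then 1 else 0) =
      T.degree u + (if u = x then 1 else 0) + (if u = y then 1 else 0) := by
  have hdel : T.degree u = (T.deleteEdges {s(a, w)}).degree u +
      (if u = a then 1 else 0) + (if u = w then 1 else 0) := by
    convert degree_sup_edge (T := T.deleteEdges {s(a, w)}) h.ne (by simp [deleteEdges_adj]) u
    exact (deleteEdges_sup_edge h).symm
  have hadd : (edgeExchange T a w x y).degree u = (T.deleteEdges {s(a, w)}).degree u +
      (if u = x then 1 else 0) + (if u = y then 1 else 0) := by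
    convert degree_sup_edge (T := T.deleteEdges {s(a, w)}) (hx.ne hy)
      (fun hxy => hx.not_reachable hy hT h hxy.reachable) u
    rfl
  omega

end EdgeExchange

section DegreeShift

variable [Fintype V] {T T' T'' : SimpleGraph V} {a w x y : V} {m n : ℕ}

/-- Passing from `T` to `T'` moves `n` units of degree from `x` to `y` and changes no other degree.
Both sides carry an added term so that no subtraction occurs. -/
def DegreeShift (n : ℕ) (T T' : SimpleGraph V) (x y : V) : Prop :=
  ∀ u, T'.degree u + (if u = x then n else 0) = T.degree u + (if u = y then n else 0)

lemma degreeShift_edgeExchange (hT : T.IsTree) (h : T.Adj a w) (hx : OnSide T a w x) :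
    DegreeShift 1 T (edgeExchange T a w x w) a x := fun u => by
  have := degree_edgeExchange hT h hx (onSide_left h.symm) u
  omega

lemma DegreeShift.trans (h : DegreeShift n T T' x y) (h' : DegreeShift n T' T'' w x) :
    DegreeShift n T T'' w y := fun u => by
  have := h u
  have := h' u
  omega

lemma DegreeShift.add (h : DegreeShift m T T' x y) (h' : DegreeShift n T' T'' x y) :
    DegreeShift (m + n) T T'' x y := fun u => by
  have := h u
  have := h' u
  grind

lemma DegreeShift.leafSet_subset_insert (h : DegreeShift 1 T T' x y)
    (hpos : ∀ u, 1 ≤ T.degree u) : leafSet T' ⊆ insert x ((leafSet T).erase y) := by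
  intro z hz
  have hzT := h z
  have := hpos z
  rw [mem_leafSet] at hz
  rw [Finset.mem_insert, Finset.mem_erase, mem_leafSet]
  grind

lemma DegreeShift.branchSet_eq (h : DegreeShift 1 T T' x y) (hx : T.degree x ≤ 2)
    (hy : T.degree y ≤ 1) : branchSet T' = branchSet T := by
  ext z
  have hz := h z
  rw [mem_branchSet, mem_branchSet]
  grind

lemma DegreeShift.leafSet_subset (h : DegreeShift n T T' x y) (hx : T.degree x = n + 2)
    (hy : 2 ≤ T.degree y) : leafSet T' ⊆ leafSet T := by
  intro z hz
  have hzT := h z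
  rw [mem_leafSet] at hz ⊢
  grind

lemma DegreeShift.branchSet_subset_erase (h : DegreeShift n T T' x y) (hxy : x ≠ y)
    (hx : T.degree x = n + 2) (hy : 3 ≤ T.degree y) :
    branchSet T' ⊆ (branchSet T).erase x := by
  intro z hz
  have hzT := h z
  rw [mem_branchSet] at hz
  rw [Finset.mem_erase, mem_branchSet]
  grind

/-- The edges `w z` are replaced one by one by `y z`. -/
lemma exists_degreeShift_merge {G : SimpleGraph V} (n : ℕ) (T : SimpleGraph V) (hle : T ≤ G)
    (hT : T.IsTree) (hw : T.degree w = n + 2) (hy : T.Adj w y)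
    (hz : ∀ z, T.Adj w z → z ≠ a → z ≠ y → G.Adj z y) :
    ∃ T' ≤ G, T'.IsTree ∧ DegreeShift n T T' w y := by
  induction n generalizing T with
  | zero => exact ⟨T, hle, hT, fun u => by simp⟩
  | succ n ih =>
    obtain ⟨z, hwz, hne⟩ := exists_adj_notMem_of_card_lt_degree (T := T) (w := w) {a, y}
      (Finset.card_le_two.trans_lt (by omega))
    simp only [Finset.mem_insert, Finset.mem_singleton, not_or] at hne
    have hyz : OnSide T w z y := (onSide_left hy.symm).of_ne hT hy.symm hwz hne.2
    have hshift := degreeShift_edgeExchange hT hwz hyz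
    have hadj : ∀ u, (edgeExchange T w z y z).Adj w u ↔ T.Adj w u ∧ u ≠ z := fun u => by
      have := hy.ne
      have := hwz.ne
      rw [edgeExchange_adj, ne_eq, Sym2.eq_iff, Sym2.eq_iff]
      grind
    obtain ⟨T', hle', hT', hshift'⟩ := ih (edgeExchange T w z y z)
      (edgeExchange_le hle (hz z hwz hne.1 hne.2).symm)
      (isTree_edgeExchange hT hwz hyz (onSide_left hwz.symm))
      (by have := hshift w; simp only [if_true, hy.ne, if_false] at this; omega)
      ((hadj y).2 ⟨hy, Ne.symm hne.2⟩) fun u hu => hz u ((hadj u).1 hu).1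
    exact ⟨T', hle', hT', n.add_comm 1 ▸ hshift.add hshift'⟩

end DegreeShift

section LeafMinimal

variable [Fintype V] {G T T' : SimpleGraph V} {u v x y : V}

/-- `T` is a spanning tree of `G` with the fewest leaves, and it has at least three leaves. Spanning
paths are excluded because the two ends of a Hamiltonian path may be adjacent in `G`. -/
structure IsLeafMinimal (G T : SimpleGraph V) : Prop where
  le : T ≤ G
  isTree : T.IsTree
  three_le : 3 ≤ (leafSet T).card
  min : ∀ T' ≤ G, T'.IsTree → (leafSet T).card ≤ (leafSet T').card

namespace IsLeafMinimal

lemma one_le_degree (h : IsLeafMinimal G T) (u : V) : 1 ≤ T.degree u := by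
  have := h.three_le
  have := Finset.card_le_univ (leafSet T)
  have : Nontrivial V := Fintype.one_lt_card_iff_nontrivial.1 (by omega)
  exact h.isTree.connected.preconnected.degree_pos_of_nontrivial u

lemma of_card_le (h : IsLeafMinimal G T) (hle : T' ≤ G) (hT' : T'.IsTree)
    (hcard : (leafSet T').card ≤ (leafSet T).card) : IsLeafMinimal G T' :=
  ⟨hle, hT', h.three_le.trans (h.min T' hle hT'), fun T'' hle'' hT'' =>
    hcard.trans (h.min T'' hle'' hT'')⟩

lemma of_degreeShift (h : IsLeafMinimal G T) (hle : T' ≤ G) (hT' : T'.IsTree)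
    (hshift : DegreeShift 1 T T' x y) (hy : T.degree y = 1) : IsLeafMinimal G T' := by
  refine h.of_card_le hle hT' ?_
  calc (leafSet T').card ≤ (insert x ((leafSet T).erase y)).card :=
        Finset.card_le_card (hshift.leafSet_subset_insert h.one_le_degree)
    _ ≤ ((leafSet T).erase y).card + 1 := Finset.card_insert_le _ _
    _ = (leafSet T).card := Finset.card_erase_add_one (mem_leafSet.2 hy)

lemma degree_le_two (h : IsLeafMinimal G T) (hle : T' ≤ G) (hT' : T'.IsTree)
    (hshift : DegreeShift 1 T T' x y) (hy : T.degree y = 1) : T.degree x ≤ 2 := by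
  by_contra hx
  have hx' : x ∉ leafSet T' := fun hmem => by
    have := hshift x
    rw [mem_leafSet] at hmem
    grind
  have hsub : leafSet T' ⊆ (leafSet T).erase y :=
    (Finset.subset_insert_iff_of_notMem hx').1 (hshift.leafSet_subset_insert h.one_le_degree)
  have := (h.min T' hle hT').trans (Finset.card_le_card hsub)
  have := Finset.card_erase_lt_of_mem (mem_leafSet.2 hy)
  omega

/-- If `u` and `v` were adjacent in `G`, then the edge `u v` could replace an edge at a branch
vertex between `u` and `v`, which costs two leaves and creates at most one. -/
lemma not_adj (h : IsLeafMinimal G T) (hu : T.degree u = 1) (hv : T.degree v = 1) (huv : u ≠ v) :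
    ¬ G.Adj u v := by
  intro hadj
  obtain ⟨x, hx, hxuv⟩ := Finset.exists_mem_notMem_of_card_lt_card
    ((Finset.card_le_two (a := u) (b := v)).trans_lt h.three_le)
  simp only [Finset.mem_insert, Finset.mem_singleton, not_or] at hxuv
  obtain ⟨z, q, hz, hzq, huz, hvq⟩ := exists_branch_between_leaves h.isTree hu hv
    (mem_leafSet.1 hx) huv (Ne.symm hxuv.1) (Ne.symm hxuv.2)
  have hsub : leafSet (edgeExchange T z q u v) ⊆ insert q (((leafSet T).erase u).erase v) := by
    intro y hy
    have hdeg := degree_edgeExchange h.isTree hzq huz hvq y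
    have := h.one_le_degree y
    rw [mem_leafSet] at hy
    simp only [Finset.mem_insert, Finset.mem_erase, mem_leafSet]
    grind
  have := h.min _ (edgeExchange_le h.le hadj) (isTree_edgeExchange h.isTree hzq huz hvq)
  have := Finset.card_le_card hsub
  have := Finset.card_insert_le q (((leafSet T).erase u).erase v)
  have := Finset.card_erase_add_one (mem_leafSet.2 hu)
  have := Finset.card_erase_add_one (Finset.mem_erase.2 ⟨huv.symm, mem_leafSet.2 hv⟩)
  omega

end IsLeafMinimal

end LeafMinimal

section ObliqueLeaf

variable {G T : SimpleGraph V} {a c v v' w y z : V}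

/-- The oriented form of `IsObliqueNbr G T s(a, w) v` for a leaf `v` of `T`: the vertex `v` is
adjacent in `G` to the far end `w` of the tree edge `a w`. -/
structure IsObliqueLeaf [Fintype V] (G T : SimpleGraph V) (a w v : V) : Prop where
  degree_eq_one : T.degree v = 1
  adj : T.Adj a w
  onSide : OnSide T a w v
  gadj : G.Adj v w

variable [Fintype V]

namespace IsObliqueLeaf

lemma isTree (h : IsObliqueLeaf G T a w v) (hT : T.IsTree) : (edgeExchange T a w v w).IsTree :=
  isTree_edgeExchange hT h.adj h.onSide (onSide_left h.adj.symm)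

lemma degreeShift (h : IsObliqueLeaf G T a w v) (hT : T.IsTree) :
    DegreeShift 1 T (edgeExchange T a w v w) a v :=
  degreeShift_edgeExchange hT h.adj h.onSide

lemma onSide_of_ne (h : IsObliqueLeaf G T a w v) (hT : T.IsTree) (hy : T.Adj w y) (hya : y ≠ a) :
    OnSide T w y v :=
  h.onSide.of_ne hT h.adj hy hya

lemma ne_of_adj (h : IsObliqueLeaf G T a w v) (hT : T.IsTree) (hy : T.Adj w y) (hya : y ≠ a) :
    v ≠ y :=
  (h.onSide_of_ne hT hy hya).ne (onSide_left hy.symm)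

lemma near_degree_le_two (h : IsObliqueLeaf G T a w v) (hT : IsLeafMinimal G T) :
    T.degree a ≤ 2 :=
  hT.degree_le_two (edgeExchange_le hT.le h.gadj) (h.isTree hT.isTree) (h.degreeShift hT.isTree)
    h.degree_eq_one

lemma isLeafMinimal (h : IsObliqueLeaf G T a w v) (hT : IsLeafMinimal G T) :
    IsLeafMinimal G (edgeExchange T a w v w) :=
  hT.of_degreeShift (edgeExchange_le hT.le h.gadj) (h.isTree hT.isTree) (h.degreeShift hT.isTree)
    h.degree_eq_one

lemma near_degree_eq_two (h : IsObliqueLeaf G T a w v) (hT : IsLeafMinimal G T) (hva : v ≠ a) :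
    T.degree a = 2 := by
  have := h.near_degree_le_two hT
  have := hT.one_le_degree a
  have : T.degree a ≠ 1 := fun ha =>
    hva (h.onSide.eq_of_degree_eq_one hT.isTree.connected ha h.adj)
  omega

/-- After the exchange that gives `v` the edge to `w`, the near end `a` is a leaf. -/
lemma not_adj_near (h : IsObliqueLeaf G T a w v) (hT : IsLeafMinimal G T) (hva : v ≠ a)
    (hv' : T.degree v' = 1) (hvv' : v' ≠ v) : ¬ G.Adj v' a := by
  have ha := h.near_degree_eq_two hT hva
  have hv'a : v' ≠ a := by
    rintro rfl
    omega
  have hsa := h.degreeShift hT.isTree a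
  have hsv' := h.degreeShift hT.isTree v'
  exact (h.isLeafMinimal hT).not_adj (by grind) (by grind) hv'a

/-- The tree `T - a w + v w - w y + y a`. -/
lemma exists_slide (h : IsObliqueLeaf G T a w v) (hle : T ≤ G) (hT : T.IsTree) (hy : T.Adj w y)
    (hya : y ≠ a) (hadj : G.Adj y a) : ∃ T' ≤ G, T'.IsTree ∧ DegreeShift 1 T T' w v := by
  have hT₁ := h.isTree hT
  have hvw : (edgeExchange T a w v w).Adj v w := edgeExchange_adj_new h.gadj.ne
  have hyw : (edgeExchange T a w v w).Adj y w := by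
    have := h.adj.ne
    refine edgeExchange_adj.2 (Or.inl ⟨hy.symm, ?_⟩)
    rw [ne_eq, Sym2.eq_iff]
    grind
  have hav : OnSide (edgeExchange T a w v w) v w a :=
    (onSide_left h.adj).edgeExchange hT h.adj h.onSide (onSide_left h.adj.symm)
  have haw : OnSide (edgeExchange T a w v w) w y a :=
    hav.of_ne hT₁ hvw hyw.symm (h.ne_of_adj hT hy hya).symm
  refine ⟨edgeExchange (edgeExchange T a w v w) w y a y,
    edgeExchange_le (edgeExchange_le hle h.gadj) hadj.symm,
    isTree_edgeExchange hT₁ hyw.symm haw (onSide_left hyw), ?_⟩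
  exact (h.degreeShift hT).trans (degreeShift_edgeExchange hT₁ hyw.symm haw)

lemma exists_far_neighbor (h : IsObliqueLeaf G T a w v) (hT : IsLeafMinimal G T) :
    ∃ y, T.Adj w y ∧ y ≠ a := by
  have := hT.one_le_degree w
  have : T.degree w ≠ 1 := fun hw => hT.not_adj h.degree_eq_one hw h.gadj.ne h.gadj
  simpa using exists_adj_notMem_of_card_lt_degree (T := T) (w := w) {a}
    (by rw [Finset.card_singleton]; omega)

lemma not_adj_far_neighbor_near_of_ne (h : IsObliqueLeaf G T a w v)
    (h' : IsObliqueLeaf G T a w v') (hT : IsLeafMinimal G T) (hvv' : v ≠ v') (hy : T.Adj w y)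
    (hya : y ≠ a) : ¬ G.Adj y a := by
  intro hadj
  obtain ⟨T', hle, hT', hshift⟩ := h.exists_slide hT.le hT.isTree hy hya hadj
  have := hT.degree_le_two hle hT' hshift h.degree_eq_one
  have hminT' := hT.of_degreeShift hle hT' hshift h.degree_eq_one
  have := hminT'.one_le_degree w
  have := h.gadj.ne
  have := h'.gadj.ne
  have := h'.degree_eq_one
  have hw := hshift w
  have hv' := hshift v'
  exact hminT'.not_adj (by grind) (by grind) h'.gadj.ne h'.gadj

lemma unique (h : IsObliqueLeaf G T a w v) (h' : IsObliqueLeaf G T a w v') (hK : K14Free G)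
    (hT : IsLeafMinimal G T) : v = v' := by
  by_contra hvv'
  have hne : ∀ u u', IsObliqueLeaf G T a w u → IsObliqueLeaf G T a w u' → u ≠ u' → u ≠ a := by
    rintro u u' hu hu' huu' rfl
    exact huu' (hu'.onSide.eq_of_degree_eq_one hT.isTree.connected hu.degree_eq_one hu.adj).symm
  have hva := hne v v' h h' hvv'
  have hv'a := hne v' v h' h (Ne.symm hvv')
  obtain ⟨y, hy, hya⟩ := h.exists_far_neighbor hT
  have not_adj_y : ∀ u u', IsObliqueLeaf G T a w u → IsObliqueLeaf G T a w u' → u ≠ u' →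
      ¬ G.Adj u y := fun u u' hu hu' huu' huy => by
    have hobl : IsObliqueLeaf G T w y u :=
      ⟨hu.degree_eq_one, hy, hu.onSide_of_ne hT.isTree hy hya, huy⟩
    exact hobl.not_adj_near hT hu.gadj.ne hu'.degree_eq_one huu'.symm hu'.gadj
  exact hK ⟨w, v, v', a, y, hvv', hva, h.ne_of_adj hT.isTree hy hya, hv'a,
    h'.ne_of_adj hT.isTree hy hya, hya.symm, h.gadj.symm, h'.gadj.symm, hT.le h.adj.symm, hT.le hy,
    hT.not_adj h.degree_eq_one h'.degree_eq_one hvv',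
    h'.not_adj_near hT hv'a h.degree_eq_one hvv', not_adj_y v v' h h' hvv',
    h.not_adj_near hT hva h'.degree_eq_one (Ne.symm hvv'), not_adj_y v' v h' h (Ne.symm hvv'),
    fun hay => h.not_adj_far_neighbor_near_of_ne h' hT hvv' hy hya hay.symm⟩

lemma not_reverse (h : IsObliqueLeaf G T a w v) (hT : IsLeafMinimal G T) :
    ¬ IsObliqueLeaf G T w a v' := by
  intro h'
  have hne : v' ≠ v := (h.onSide.ne h'.onSide).symm
  by_cases hva : v = a
  · subst hva
    exact hT.not_adj h'.degree_eq_one h.degree_eq_one hne h'.gadj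
  · exact h.not_adj_near hT hva h'.degree_eq_one hne h'.gadj

lemma ne_near (h : IsObliqueLeaf G T a w v) (hT : T.IsTree) (hc : 3 ≤ T.degree c)
    (hac : OnSide T a w c) : v ≠ a := by
  rintro rfl
  obtain rfl := hac.eq_of_degree_eq_one hT.connected h.degree_eq_one h.adj
  have := h.degree_eq_one
  omega

lemma not_adj_far_neighbor_near_of_three_le (h : IsObliqueLeaf G T a w v) (hT : IsLeafMinimal G T)
    (hw : 3 ≤ T.degree w) (hy : T.Adj w y) (hya : y ≠ a) : ¬ G.Adj y a := fun hadj => by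
  obtain ⟨T', hle, hT', hshift⟩ := h.exists_slide hT.le hT.isTree hy hya hadj
  have := hT.degree_le_two hle hT' hshift h.degree_eq_one
  omega

lemma not_adj_far_neighbor (h : IsObliqueLeaf G T a w v) (hT : IsLeafMinimal G T)
    (hw : 3 ≤ T.degree w) (hy : T.Adj w y) (hya : y ≠ a) : ¬ G.Adj v y := fun hadj => by
  have hobl : IsObliqueLeaf G T w y v :=
    ⟨h.degree_eq_one, hy, h.onSide_of_ne hT.isTree hy hya, hadj⟩
  have := hobl.near_degree_le_two hT
  omega

lemma adj_of_far_neighbors (h : IsObliqueLeaf G T a w v) (hK : K14Free G)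
    (hT : IsLeafMinimal G T) (hw : 3 ≤ T.degree w) (hva : v ≠ a) (hadj : ¬ G.Adj v a)
    (hy : T.Adj w y) (hya : y ≠ a) (hz : T.Adj w z) (hza : z ≠ a) (hyz : y ≠ z) : G.Adj y z := by
  by_contra hyz'
  exact hK ⟨w, v, a, y, z, hva, h.ne_of_adj hT.isTree hy hya, h.ne_of_adj hT.isTree hz hza,
    hya.symm, hza.symm, hyz, h.gadj.symm, hT.le h.adj.symm, hT.le hy, hT.le hz, hadj,
    h.not_adj_far_neighbor hT hw hy hya, h.not_adj_far_neighbor hT hw hz hza,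
    fun hay => h.not_adj_far_neighbor_near_of_three_le hT hw hy hya hay.symm,
    fun haz => h.not_adj_far_neighbor_near_of_three_le hT hw hz hza haz.symm, hyz'⟩

lemma not_isObliqueLeaf_of_near_ne (h : IsObliqueLeaf G T a w v) (hK : K14Free G)
    (hT : IsLeafMinimal G T) (hw : 3 ≤ T.degree w) (hva : v ≠ a) (hadj : ¬ G.Adj v a)
    (hya : y ≠ a) : ¬ IsObliqueLeaf G T y w v' := by
  intro h'
  have hvv' : v ≠ v' := by
    rintro rfl
    exact hya (h'.onSide.unique h.onSide hT.isTree h'.adj h.adj)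
  obtain ⟨z, hz, hne⟩ := exists_adj_notMem_of_card_lt_degree (T := T) (w := w) {a, y}
    (Finset.card_le_two.trans_lt hw)
  simp only [Finset.mem_insert, Finset.mem_singleton, not_or] at hne
  exact hK ⟨w, v, v', a, z, hvv', hva, h.ne_of_adj hT.isTree hz hne.1,
    h'.ne_of_adj hT.isTree h.adj.symm hya.symm, h'.ne_of_adj hT.isTree hz hne.2, Ne.symm hne.1,
    h.gadj.symm, h'.gadj.symm, hT.le h.adj.symm, hT.le hz,
    hT.not_adj h.degree_eq_one h'.degree_eq_one hvv', hadj,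
    h.not_adj_far_neighbor hT hw hz hne.1, h'.not_adj_far_neighbor hT hw h.adj.symm hya.symm,
    h'.not_adj_far_neighbor hT hw hz hne.2,
    fun haz => h.not_adj_far_neighbor_near_of_three_le hT hw hz hne.1 haz.symm⟩

end IsObliqueLeaf

end ObliqueLeaf

section MoveLeaf

variable {G T : SimpleGraph V} {a p q s v w x y : V}

/-- The tree obtained from `T` by detaching the leaf `v` from its neighbor `s` and using it to
subdivide the edge `a w`. -/
def moveLeaf (T : SimpleGraph V) (s v a w : V) : SimpleGraph V :=
  edgeExchange (edgeExchange T a w v w) s v a v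

lemma moveLeaf_le (hT : T ≤ G) (hvw : G.Adj v w) (hva : G.Adj v a) : moveLeaf T s v a w ≤ G :=
  edgeExchange_le (edgeExchange_le hT hvw) hva.symm

lemma adj_of_moveLeaf_adj (h : (moveLeaf T s v a w).Adj p q) :
    (T.Adj p q ∧ s(p, q) ≠ s(a, w) ∧ s(p, q) ≠ s(s, v)) ∨ s(p, q) = s(v, w) ∨
      s(p, q) = s(a, v) := by
  rw [moveLeaf, edgeExchange_adj, edgeExchange_adj] at h
  grind

lemma adj_edgeExchange_of_leaf (hs : T.Adj s v) (hvw : v ≠ w) (hva : v ≠ a) :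
    (edgeExchange T a w v w).Adj s v := by
  refine edgeExchange_adj.2 (Or.inl ⟨hs, ?_⟩)
  rw [ne_eq, Sym2.eq_iff]
  grind

variable [Fintype V]

lemma onSide_edgeExchange_of_leaf (hT : T.IsTree) (hv : T.degree v = 1) (hs : T.Adj s v)
    (h : T.Adj a w) (hvw : OnSide T a w v) (hva : v ≠ a) :
    OnSide (edgeExchange T a w v w) s v a := by
  have hT₁ := isTree_edgeExchange hT h hvw (onSide_left h.symm)
  have hav : OnSide (edgeExchange T a w v w) v w a :=
    (onSide_left h).edgeExchange hT h hvw (onSide_left h.symm)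
  obtain ⟨b, hb, hab⟩ := exists_adj_onSide hT₁.connected hva.symm
  rcases edgeExchange_adj.1 hb with ⟨hbv, -⟩ | ⟨hbv, -⟩
  · rwa [eq_of_adj_of_degree_eq_one hv hs.symm hbv.symm]
  · obtain rfl : w = b := by
      rw [Sym2.eq_iff] at hbv
      grind
    exact (hav.not_onSide hab).elim

lemma isTree_moveLeaf (hT : T.IsTree) (hv : T.degree v = 1) (hs : T.Adj s v) (h : T.Adj a w)
    (hvw : OnSide T a w v) (hva : v ≠ a) : (moveLeaf T s v a w).IsTree := by
  have hsv := adj_edgeExchange_of_leaf hs (hvw.ne (onSide_left h.symm)) hva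
  exact isTree_edgeExchange (isTree_edgeExchange hT h hvw (onSide_left h.symm)) hsv
    (onSide_edgeExchange_of_leaf hT hv hs h hvw hva) (onSide_left hsv.symm)

lemma degreeShift_moveLeaf (hT : T.IsTree) (hv : T.degree v = 1) (hs : T.Adj s v) (h : T.Adj a w)
    (hvw : OnSide T a w v) (hva : v ≠ a) : DegreeShift 1 T (moveLeaf T s v a w) s v :=
  (degreeShift_edgeExchange hT h hvw).trans <|
    degreeShift_edgeExchange (isTree_edgeExchange hT h hvw (onSide_left h.symm))
      (adj_edgeExchange_of_leaf hs (hvw.ne (onSide_left h.symm)) hva)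
      (onSide_edgeExchange_of_leaf hT hv hs h hvw hva)

/-- The left-hand side, with `v` read as `w` in the first summand, changes by at most one along
every edge of the new tree. -/
lemma le_dist_moveLeaf (hT : T.IsTree) (hv : T.degree v = 1) (hs : T.Adj s v) (h : T.Adj a w)
    (hvw : OnSide T a w v) (hva : v ≠ a) (hx : x ≠ v) (hy : y ≠ v) :
    T.dist x y + (if OnSide T a w y ∧ OnSide T w a x then 1 else 0) ≤
      (moveLeaf T s v a w).dist x y := by
  let f : V → ℕ := fun u =>
    T.dist x (if u = v then w else u) + if OnSide T a w u ∧ OnSide T w a x then 1 else 0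
  have hwv : w ≠ v := (onSide_left h.symm).ne hvw
  have hw : ¬ OnSide T a w w := (onSide_left h.symm).not_onSide
  have hdist : ∀ p q, T.Adj p q → T.dist x q ≤ T.dist x p + 1 := fun p q hpq => by
    have := hT.connected.dist_triangle (u := x) (v := p) (w := q)
    rwa [dist_eq_one_iff_adj.2 hpq] at this
  have hf : ∀ p q, (moveLeaf T s v a w).Adj p q → f q ≤ f p + 1 := fun p q hpq => by
    rcases adj_of_moveLeaf_adj hpq with ⟨hadj, hne, hne'⟩ | he | he
    · have hp : p ≠ v := by
        rintro rfl
        exact hne' (by rw [eq_of_adj_of_degree_eq_one hv hadj hs.symm, Sym2.eq_swap])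
      have hq : q ≠ v := by
        rintro rfl
        exact hne' (by rw [eq_of_adj_of_degree_eq_one hv hadj.symm hs.symm])
      have hside : OnSide T a w q → OnSide T a w p := fun hqa =>
        hqa.of_adj hT h hadj.symm (by rwa [Sym2.eq_swap])
      have := hdist p q hadj
      simp only [f, hp, hq, if_false]
      grind
    · rcases Sym2.eq_iff.1 he with ⟨rfl, rfl⟩ | ⟨rfl, rfl⟩ <;> grind
    · have := hdist a w h
      have := hdist w a h.symm
      have := onSide_left h
      rcases Sym2.eq_iff.1 he with ⟨rfl, rfl⟩ | ⟨rfl, rfl⟩ <;> grind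
  have hfx : f x = 0 := by
    have : ¬ (OnSide T a w x ∧ OnSide T w a x) := fun hx => hx.1.not_onSide hx.2
    simp [f, hx, this]
  have := le_add_dist_of_forall_adj (isTree_moveLeaf hT hv hs h hvw hva).connected f hf x y
  simpa [hfx, f, hy] using this

end MoveLeaf

section Optimal

variable [Fintype V] {G T : SimpleGraph V} {a c v w : V}

/-- The total distance in `T` between branch vertices of `T`, each pair being counted twice. -/
noncomputable def spread (T : SimpleGraph V) : ℕ :=
  ∑ p ∈ branchSet T ×ˢ branchSet T, T.dist p.1 p.2

/-- Among the leaf-minimal spanning trees of `G`, the tree `T` has the fewest branch vertices and,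
among those with equally few, the largest spread. -/
structure IsOptimal (G T : SimpleGraph V) : Prop where
  isLeafMinimal : IsLeafMinimal G T
  card_branchSet_le : ∀ T', IsLeafMinimal G T' → (branchSet T).card ≤ (branchSet T').card
  spread_le : ∀ T', IsLeafMinimal G T' → (branchSet T').card = (branchSet T).card →
    spread T' ≤ spread T

lemma exists_isLeafMinimal (hG : G.Connected)
    (hL : ∀ T ≤ G, T.IsTree → 3 ≤ (leafSet T).card) : ∃ T, IsLeafMinimal G T := by
  obtain ⟨T₀, hT₀⟩ := hG.exists_isTree_le
  obtain ⟨T, hT, hmin⟩ := Finset.exists_min_image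
    (Finset.univ.filter fun T : SimpleGraph V => T ≤ G ∧ T.IsTree) (fun T => (leafSet T).card)
    ⟨T₀, by simpa using hT₀⟩
  simp only [Finset.mem_filter, Finset.mem_univ, true_and] at hT hmin
  exact ⟨T, hT.1, hT.2, hL T hT.1 hT.2, fun T' hle hT' => hmin T' ⟨hle, hT'⟩⟩

lemma IsLeafMinimal.exists_isOptimal (hT : IsLeafMinimal G T) : ∃ T', IsOptimal G T' := by
  obtain ⟨T₁, hT₁, hmin⟩ := Finset.exists_min_image (Finset.univ.filter (IsLeafMinimal G))
    (fun T => (branchSet T).card) ⟨T, by simpa using hT⟩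
  obtain ⟨T₂, hT₂, hmax⟩ := Finset.exists_max_image
    (Finset.univ.filter fun T => IsLeafMinimal G T ∧ (branchSet T).card = (branchSet T₁).card)
    spread ⟨T₁, by simpa using hT₁⟩
  simp only [Finset.mem_filter, Finset.mem_univ, true_and] at hT₁ hmin hT₂ hmax
  exact ⟨T₂, hT₂.1, fun T' hT' => hT₂.2 ▸ hmin T' hT',
    fun T' hT' hcard => hmax T' ⟨hT', hcard.trans hT₂.2⟩⟩

/-- Otherwise `v` could be moved onto the edge `a w`, which would lengthen the path from `w`
to `c`. -/
lemma IsOptimal.not_adj_near (hT : IsOptimal G T) (h : IsObliqueLeaf G T a w v)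
    (hw : 3 ≤ T.degree w) (hc : 3 ≤ T.degree c) (hac : OnSide T a w c) : ¬ G.Adj v a := by
  intro hva
  have hmin := hT.isLeafMinimal
  have hv := h.degree_eq_one
  obtain ⟨s, hs, -⟩ := degree_eq_one_iff_existsUnique_adj.1 hv
  have hle : moveLeaf T s v a w ≤ G := moveLeaf_le hmin.le h.gadj hva
  have htree := isTree_moveLeaf hmin.isTree hv hs.symm h.adj h.onSide hva.ne
  have hshift := degreeShift_moveLeaf hmin.isTree hv hs.symm h.adj h.onSide hva.ne
  have hbranch : branchSet (moveLeaf T s v a w) = branchSet T :=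
    hshift.branchSet_eq (hmin.degree_le_two hle htree hshift hv) hv.le
  have hne : ∀ x ∈ branchSet T, x ≠ v := fun x hx => by
    rintro rfl
    rw [mem_branchSet] at hx
    omega
  have hdist : ∀ x ∈ branchSet T, ∀ y ∈ branchSet T,
      T.dist x y + (if OnSide T a w y ∧ OnSide T w a x then 1 else 0) ≤
        (moveLeaf T s v a w).dist x y := fun x hx y hy =>
    le_dist_moveLeaf hmin.isTree hv hs.symm h.adj h.onSide hva.ne (hne x hx) (hne y hy)
  have hspread : spread T < spread (moveLeaf T s v a w) := by
    rw [spread, spread, hbranch]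
    refine Finset.sum_lt_sum (fun p hp => ?_) ⟨(w, c), ?_, ?_⟩
    · rw [Finset.mem_product] at hp
      exact le_of_add_le_left (hdist _ hp.1 _ hp.2)
    · simp [mem_branchSet, hw, hc]
    · simpa [hac, onSide_left h.adj.symm] using
        hdist w (mem_branchSet.2 hw) c (mem_branchSet.2 hc)
  exact hspread.not_ge
    (hT.spread_le _ (hmin.of_degreeShift hle htree hshift hv) (congrArg Finset.card hbranch))

end Optimal

section Counting

variable [Fintype V] {G T : SimpleGraph V} {a c w : V}

/-- The edges of `T` that have an oblique neighbor among the leaves of `T`. -/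
noncomputable def obliqueEdges (G T : SimpleGraph V) : Finset (Sym2 V) :=
  T.edgeFinset.filter fun e => ∃ v, T.degree v = 1 ∧ IsObliqueNbr G T e v

lemma obliqueEdges_subset (G T : SimpleGraph V) : obliqueEdges G T ⊆ T.edgeFinset :=
  Finset.filter_subset _ _

lemma mem_obliqueEdges {e : Sym2 V} :
    e ∈ obliqueEdges G T ↔ ∃ a w v, e = s(a, w) ∧ IsObliqueLeaf G T a w v := by
  rw [obliqueEdges, Finset.mem_filter, mem_edgeFinset]
  constructor
  · rintro ⟨he, v, hv, a, w, rfl, hvw, hadj⟩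
    exact ⟨a, w, v, rfl, hv, he, hvw, hadj⟩
  · rintro ⟨a, w, v, rfl, h⟩
    exact ⟨h.adj, v, h.degree_eq_one, a, w, rfl, h.onSide, h.gadj⟩

/-- The pair of a leaf `v` and a `G`-neighbor `u` is sent to the last edge of the path of `T`
from `v` to `u`. -/
lemma IsLeafMinimal.sum_degree_le_card_obliqueEdges (hK : K14Free G) (hT : IsLeafMinimal G T) :
    ∑ v ∈ leafSet T, G.degree v ≤ (obliqueEdges G T).card := by
  let LastEdge : (_ : V) × V → Sym2 V → Prop := fun p e =>
    ∃ a, e = s(a, p.2) ∧ IsObliqueLeaf G T a p.2 p.1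
  have hcard : ((leafSet T).sigma fun v => G.neighborFinset v).card =
      ∑ v ∈ leafSet T, G.degree v := by
    simp only [Finset.card_sigma, card_neighborFinset_eq_degree]
  rw [← hcard]
  refine Finset.card_le_card_of_forall_subsingleton LastEdge ?_ ?_
  · rintro ⟨v, u⟩ hvu
    rw [Finset.mem_sigma, mem_leafSet, mem_neighborFinset] at hvu
    obtain ⟨a, hau, hvau⟩ := exists_adj_onSide hT.isTree.connected hvu.2.ne
    have h : IsObliqueLeaf G T a u v := ⟨hvu.1, hau, hvau, hvu.2⟩
    exact ⟨s(a, u), mem_obliqueEdges.2 ⟨a, u, v, rfl, h⟩, a, rfl, h⟩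
  · rintro e - ⟨v, u⟩ ⟨-, a, rfl, h⟩ ⟨v', u'⟩ ⟨-, a', he, h'⟩
    rcases Sym2.eq_iff.1 he with ⟨rfl, rfl⟩ | ⟨rfl, rfl⟩
    · obtain rfl := h.unique h' hK hT
      rfl
    · exact (h.not_reverse hT h').elim

/-- If all neighbors of `w` other than `a` were branch vertices, `w` could be merged into one of
them. -/
lemma IsOptimal.exists_neighbor_degree_le_two (hT : IsOptimal G T) (hw : 3 ≤ T.degree w)
    (hclique : ∀ y z, T.Adj w y → y ≠ a → T.Adj w z → z ≠ a → y ≠ z → G.Adj y z) :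
    ∃ y, T.Adj w y ∧ y ≠ a ∧ T.degree y ≤ 2 := by
  by_contra! hbranch
  have hmin := hT.isLeafMinimal
  obtain ⟨y, hy, hya⟩ := exists_adj_notMem_of_card_lt_degree (T := T) (w := w) {a}
    (by rw [Finset.card_singleton]; omega)
  rw [Finset.mem_singleton] at hya
  have hdeg : T.degree w = T.degree w - 2 + 2 := by omega
  obtain ⟨T', hle, hT', hshift⟩ := exists_degreeShift_merge _ T hmin.le hmin.isTree hdeg hy
    fun z hz hza hzy => hclique z y hz hza hy hya hzy
  have hy3 : 3 ≤ T.degree y := hbranch y hy hya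
  have hleaf := hshift.leafSet_subset hdeg (by omega)
  have := hT.card_branchSet_le T' (hmin.of_card_le hle hT' (Finset.card_le_card hleaf))
  have := Finset.card_le_card (hshift.branchSet_subset_erase hy.ne hdeg hy3)
  have := Finset.card_erase_lt_of_mem (mem_branchSet.2 hw)
  omega

lemma IsOptimal.exists_notMem_obliqueEdges (hT : IsOptimal G T) (hK : K14Free G)
    (hc : 3 ≤ T.degree c) (hw : 3 ≤ T.degree w) (hcw : c ≠ w) :
    ∃ z, T.Adj w z ∧ s(w, z) ∉ obliqueEdges G T ∧ (OnSide T z w c ∨ T.degree z ≤ 2) := by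
  have hmin := hT.isLeafMinimal
  have not_near : ∀ z v, ¬ IsObliqueLeaf G T w z v := fun z v h => by
    have := h.near_degree_le_two hmin
    omega
  have hmem : ∀ z, s(w, z) ∈ obliqueEdges G T ↔ ∃ v, IsObliqueLeaf G T z w v := fun z => by
    rw [mem_obliqueEdges]
    constructor
    · rintro ⟨p, q, v, he, h⟩
      rcases Sym2.eq_iff.1 he with ⟨rfl, rfl⟩ | ⟨rfl, rfl⟩
      exacts [(not_near _ _ h).elim, ⟨v, h⟩]
    · rintro ⟨v, h⟩
      exact ⟨z, w, v, Sym2.eq_swap, h⟩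
  obtain ⟨a, ha, hac⟩ := exists_adj_onSide hmin.isTree.connected hcw
  by_cases hwa : s(w, a) ∈ obliqueEdges G T
  · obtain ⟨v, h⟩ := (hmem a).1 hwa
    have hva := h.ne_near hmin.isTree hc hac
    have hadj := hT.not_adj_near h hw hc hac
    obtain ⟨y, hy, hya, hdeg⟩ := hT.exists_neighbor_degree_le_two hw fun y z hy hya hz hza hyz =>
      h.adj_of_far_neighbors hK hmin hw hva hadj hy hya hz hza hyz
    refine ⟨y, hy, fun hwy => ?_, Or.inr hdeg⟩
    obtain ⟨v', h'⟩ := (hmem y).1 hwy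
    exact h.not_isObliqueLeaf_of_near_ne hK hmin hw hva hadj hya h'
  · exact ⟨a, ha.symm, hwa, Or.inl hac⟩

lemma IsOptimal.card_branchSet_le_card_sdiff (hT : IsOptimal G T) (hK : K14Free G) :
    (branchSet T).card ≤ (T.edgeFinset \ obliqueEdges G T).card + 1 := by
  rcases (branchSet T).eq_empty_or_nonempty with hempty | ⟨c, hc⟩
  · simp [hempty]
  rw [← Finset.card_erase_add_one hc, add_le_add_iff_right]
  rw [mem_branchSet] at hc
  let OwnEdge : V → Sym2 V → Prop := fun w e =>
    ∃ z, e = s(w, z) ∧ T.Adj w z ∧ (OnSide T z w c ∨ T.degree z ≤ 2)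
  refine Finset.card_le_card_of_forall_subsingleton OwnEdge ?_ ?_
  · intro w hw
    rw [Finset.mem_erase, mem_branchSet] at hw
    obtain ⟨z, hz, hmem, hside⟩ := hT.exists_notMem_obliqueEdges hK hc hw.2 (Ne.symm hw.1)
    exact ⟨s(w, z), Finset.mem_sdiff.2 ⟨mem_edgeFinset.2 hz, hmem⟩, z, rfl, hz, hside⟩
  · rintro e - w ⟨hw, z, rfl, -, hwz⟩ w' ⟨hw', z', he, -, hwz'⟩
    rw [Finset.mem_erase, mem_branchSet] at hw hw'
    rcases Sym2.eq_iff.1 he with ⟨rfl, -⟩ | ⟨rfl, rfl⟩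
    · rfl
    · exact ((hwz.resolve_right (by omega)).not_onSide (hwz'.resolve_right (by omega))).elim

lemma IsOptimal.sum_degree_add_card_branchSet_le_card (hT : IsOptimal G T) (hK : K14Free G) :
    ∑ v ∈ leafSet T, G.degree v + (branchSet T).card ≤ Fintype.card V := by
  have := hT.isLeafMinimal.sum_degree_le_card_obliqueEdges hK
  have := hT.card_branchSet_le_card_sdiff hK
  have := Finset.card_sdiff_add_card_eq_card (obliqueEdges_subset G T)
  have := hT.isLeafMinimal.isTree.card_edgeFinset
  omega

lemma IsLeafMinimal.sum_degree_add_card_le (hT : IsLeafMinimal G T) {s : Finset V}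
    (hs : s ⊆ leafSet T) :
    ∑ v ∈ s, G.degree v + (leafSet T).card ≤ ∑ v ∈ leafSet T, G.degree v + s.card := by
  have hrest : (leafSet T \ s).card ≤ ∑ v ∈ leafSet T \ s, G.degree v := by
    rw [Finset.card_eq_sum_ones]
    exact Finset.sum_le_sum fun v _ => (hT.one_le_degree v).trans (degree_le_of_le hT.le)
  have := Finset.sum_sdiff hs (f := fun v => G.degree v)
  have := Finset.card_sdiff_add_card_eq_card hs
  omega

lemma IsLeafMinimal.isIndepFinset (hT : IsLeafMinimal G T) {s : Finset V} (hs : s ⊆ leafSet T) :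
    IsIndepFinset G s := fun _ hu _ hv huv =>
  hT.not_adj (mem_leafSet.1 (hs hu)) (mem_leafSet.1 (hs hv)) huv

end Counting

/-- If `m ≤ k+1` and `G` is a connected `K_{1,4}`-free graph of order `n` with
`σ_{m+2}(G) ≥ n - k`, then `G` has a spanning tree with at most `m+k+2` leaves and branch
vertices in total. -/
theorem stmt0 {V : Type*} [Fintype V] (k m : ℕ) (hm : m ≤ k + 1)
    (G : SimpleGraph V) (hG : G.Connected) (hK : K14Free G)
    (hσ : ∀ s : Finset V, IsIndepFinset G s → s.card = m + 2 →
      Fintype.card V - k ≤ ∑ v ∈ s, G.degree v) :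
    ∃ T : SimpleGraph V, T ≤ G ∧ T.IsTree ∧
      (leafSet T).card + (branchSet T).card ≤ m + k + 2 := by
  by_contra! hcon
  have hleaves : ∀ T ≤ G, T.IsTree → 3 ≤ (leafSet T).card ∧ m + 2 ≤ (leafSet T).card := by
    intro T hle hT
    have hlarge := hcon T hle hT
    have := card_leafSet_add_card_branchSet_le_card T
    have : Nontrivial V := Fintype.one_lt_card_iff_nontrivial.1 (by omega)
    have := card_branchSet_add_two_le_card_leafSet hT
    omega
  obtain ⟨T₀, hT₀⟩ := exists_isLeafMinimal hG fun T hle hT => (hleaves T hle hT).1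
  obtain ⟨T, hT⟩ := hT₀.exists_isOptimal
  have hmin := hT.isLeafMinimal
  obtain ⟨s, hs, hcard⟩ := Finset.exists_subset_card_eq (hleaves T hmin.le hmin.isTree).2
  have := hσ s (hmin.isIndepFinset hs) hcard
  have := hmin.sum_degree_add_card_le hs
  have := hT.sum_degree_add_card_branchSet_le_card hK
  have := hcon T hmin.le hmin.isTree
  omega
end

section
/- Let k be a positive integer and let G be a connected K_{1,4}-free simple graph of order n. If every pair of non-adjacent vertices of G has degree sum at least n−k, then G has a spanning tree T with |L(T)| + |B(T)| ≤ k+2, i.e., with at most k+2 leaves and branch vertices in total. -/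
open SimpleGraph Finset List

open scoped Classical

variable {V : Type*}

/-!
Call a vertex essential if its degree in the tree is not two, and take a spanning tree `T` with as
few essential vertices as possible; if there are at most two of them there is nothing to do. Joining
a leaf to another vertex and deleting a suitable tree edge cannot beat the minimum, which forces
three facts. Distinct leaves are not adjacent in `G`. If `u` is a leaf, `w` a `G`-neighbour of `u`
and `p` the tree neighbour of `w` towards `u`, then `p = u` or `p` has degree two, and no other leaf
is adjacent to `p`; the assignment `w ↦ p` is injective. Finally, choose `T` and an edge `bc` at a
branch vertex `b` so that the part of `T - bc` containing `b` is as small as possible; then a leaf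
`v` of that part can be chosen adjacent to no branch vertex but `b`.

Hence, for another leaf `u`, the shifted neighbourhood of `u` and the neighbourhood of `v` are
disjoint and consist, up to `u` and `b`, of vertices of degree two, so that the degree sum of the
non-adjacent vertices `u` and `v` is at most `n + 2` minus the number of essential vertices.
-/

/-- The vertex set of the component containing `a` once the edge `ac` is deleted from `T`. For an
edge `ac` of a tree it is the part of the tree lying on the side of `a`. -/
def edgeSide (T : SimpleGraph V) (a c : V) : Set V :=
  {x | (T.deleteEdges {s(a, c)}).Reachable a x}

/-- The graph obtained from `T` by exchanging the edge `ac` for the edge `st`. -/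
def swapEdge (T : SimpleGraph V) (a c s t : V) : SimpleGraph V :=
  T.deleteEdges {s(a, c)} ⊔ edge s t

section EdgeSide

variable {T : SimpleGraph V} {a b c p s t u v w x y z : V}

theorem mem_edgeSide_self : a ∈ edgeSide T a c := Reachable.refl a

theorem edgeSide_ssubset_of_mem (hz : z ∈ edgeSide T b c) (hb : b ∉ edgeSide T z p) :
    edgeSide T z p ⊂ edgeSide T b c := by
  refine (Set.ssubset_iff_of_subset fun x hx => ?_).2 ⟨b, mem_edgeSide_self, hb⟩
  obtain ⟨q⟩ := hx
  have hq : s(b, c) ∉ q.edges := fun h =>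
    hb (q.takeUntil b (q.fst_mem_support_of_mem_edges h)).reachable
  exact hz.trans ((q.toDeleteEdge s(b, c) hq).reachable.mono
    (deleteEdges_mono (deleteEdges_le _)))

theorem mem_edgeSide_swap :
    x ∈ edgeSide T c a ↔ (T.deleteEdges {s(a, c)}).Reachable c x := by
  rw [Sym2.eq_swap]
  exact Iff.rfl

theorem mem_edgeSide_swap_iff (hT : T.IsTree) (hac : T.Adj a c) :
    x ∈ edgeSide T c a ↔ x ∉ edgeSide T a c := by
  rw [mem_edgeSide_swap]
  constructor
  · exact fun hc ha => isAcyclic_iff_forall_adj_isBridge.1 hT.isAcyclic hac (ha.trans hc.symm)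
  · intro hx
    obtain ⟨q, hq⟩ := hT.connected.exists_isPath x a
    have hmem : s(a, c) ∈ q.edges := by
      by_contra h
      exact hx (q.toDeleteEdge _ h).reachable.symm
    have hc : c ∈ q.support := q.snd_mem_support_of_mem_edges hmem
    have ha : a ∉ (q.takeUntil c hc).support :=
      Walk.endpoint_notMem_support_takeUntil hq hc hac.ne
    exact ((q.takeUntil c hc).toDeleteEdge s(a, c) fun h =>
      ha (Walk.fst_mem_support_of_mem_edges _ h)).reachable.symm

theorem notMem_edgeSide (hT : T.IsTree) (hac : T.Adj a c) : c ∉ edgeSide T a c :=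
  (mem_edgeSide_swap_iff hT hac).1 mem_edgeSide_self

theorem exists_adj_notMem_edgeSide (hT : T.IsTree) (hwu : w ≠ u) :
    ∃ p, T.Adj w p ∧ u ∉ edgeSide T w p := by
  obtain ⟨q, hq⟩ := hT.connected.exists_isPath w u
  cases q with
  | nil => exact absurd rfl hwu
  | @cons _ p _ hwp q =>
    refine ⟨p, hwp, (mem_edgeSide_swap_iff hT hwp).1 ?_⟩
    have hw : w ∉ q.support := ((Walk.cons_isPath_iff _ _).1 hq).2
    exact (q.toDeleteEdge s(p, w) fun h => hw (q.snd_mem_support_of_mem_edges h)).reachable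

theorem edgeSide_ssubset_of_adj (hT : T.IsTree) (hbx : T.Adj b x) (hxc : x ≠ c) :
    edgeSide T x b ⊂ edgeSide T b c := by
  refine edgeSide_ssubset_of_mem (Adj.reachable ?_) (notMem_edgeSide hT hbx.symm)
  simp [hbx, hxc, hbx.ne']

theorem reachable_of_mem_support_isPath {H : SimpleGraph V} (hT : T.IsAcyclic) (hHT : H ≤ T)
    {q : T.Walk u v} (hq : q.IsPath) (hx : x ∈ q.support) (huv : H.Reachable u v) :
    H.Reachable u x := by
  obtain ⟨r, hr⟩ := huv.exists_isPath
  have hqr : q = r.mapLe hHT :=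
    congrArg Subtype.val ((hT.subsingleton_path u v).elim ⟨q, hq⟩ ⟨_, hr.mapLe hHT⟩)
  rw [hqr, Walk.support_mapLe_eq_support] at hx
  exact (r.takeUntil x hx).reachable

theorem reachable_of_reachable_sup_edge {H : SimpleGraph V} (hv : ¬ H.Reachable b v)
    (hw : ¬ H.Reachable b w) (h : (H ⊔ edge v w).Reachable b z) : H.Reachable b z := by
  by_contra hz
  obtain ⟨q⟩ := h
  obtain ⟨d, -, hfst, hsnd⟩ := q.exists_boundary_dart {x | H.Reachable b x} (Reachable.refl b) hz
  rcases d.adj with hd | hd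
  · exact hsnd (Reachable.trans hfst hd.reachable)
  · rcases ((edge_adj ..).1 hd).1 with ⟨h, -⟩ | ⟨h, -⟩
    · exact hv (h ▸ hfst)
    · exact hw (h ▸ hfst)

theorem isTree_swapEdge (hT : T.IsTree) (hac : T.Adj a c) (hs : s ∈ edgeSide T a c)
    (ht : t ∉ edgeSide T a c) : (swapEdge T a c s t).IsTree := by
  have hst : ¬ (T.deleteEdges {s(a, c)}).Reachable s t := fun h => ht (hs.trans h)
  have hle : T.deleteEdges {s(a, c)} ≤ swapEdge T a c s t := le_sup_left
  have hreach : ∀ x, (swapEdge T a c s t).Reachable s x := by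
    intro x
    by_cases hx : x ∈ edgeSide T a c
    · exact (Reachable.trans hs.symm hx).mono hle
    · have hadj : (swapEdge T a c s t).Adj s t :=
        Or.inr ((edge_adj ..).2 ⟨Or.inl ⟨rfl, rfl⟩, fun h => ht (h ▸ hs)⟩)
      have htc := mem_edgeSide_swap.1 ((mem_edgeSide_swap_iff hT hac).2 ht)
      have hxc := mem_edgeSide_swap.1 ((mem_edgeSide_swap_iff hT hac).2 hx)
      exact hadj.reachable.trans ((htc.symm.trans hxc).mono hle)
  exact ⟨(connected_iff_exists_forall_reachable _).2 ⟨s, hreach⟩,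
    (hT.isAcyclic.anti (deleteEdges_le _)).sup_edge_of_not_reachable hst⟩

theorem swapEdge_le {G : SimpleGraph V} (hTG : T ≤ G) (hst : G.Adj s t) :
    swapEdge T a c s t ≤ G :=
  sup_le ((deleteEdges_le _).trans hTG) ((edge_le_iff _).2 (Or.inr hst))

theorem edgeSide_swapEdge_ssubset (hT : T.IsTree) (hyb : T.Adj y b) (hyc : y ≠ c)
    (hv : v ∈ edgeSide T y b) (hw : w ∉ edgeSide T b c) :
    edgeSide (swapEdge T y b v w) b c ⊂ edgeSide T b c := by
  set H := (T.deleteEdges {s(y, b)}).deleteEdges {s(b, c)}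
  have hle : H ≤ T.deleteEdges {s(b, c)} := deleteEdges_mono (deleteEdges_le _)
  have hHv : ¬ H.Reachable b v := fun h =>
    (mem_edgeSide_swap_iff hT hyb).1 (mem_edgeSide_swap.2 (h.mono (deleteEdges_le _))) hv
  have hHw : ¬ H.Reachable b w := fun h => hw (h.mono hle)
  have hsub : ∀ z ∈ edgeSide (swapEdge T y b v w) b c, H.Reachable b z := by
    intro z hz
    refine reachable_of_reachable_sup_edge hHv hHw (hz.mono ?_)
    rw [swapEdge, deleteEdges_sup]
    exact sup_le_sup_left (deleteEdges_le _) _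
  exact (Set.ssubset_iff_of_subset fun z hz => (hsub z hz).mono hle).2
    ⟨v, (edgeSide_ssubset_of_adj hT hyb.symm hyc).subset hv, fun h => hHv (hsub v h)⟩

end EdgeSide

section Degree

variable {T : SimpleGraph V} {a c s t u v x z : V}

theorem degree_edge [Fintype ((edge s t).neighborSet z)] (hst : s ≠ t) :
    (edge s t).degree z = if z = s ∨ z = t then 1 else 0 := by
  split_ifs with hz
  · rw [degree_eq_one_iff_existsUnique_adj]
    rcases hz with rfl | rfl
    · exact ⟨t, by simp [edge_adj, hst], by simp +contextual [edge_adj, hst]⟩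
    · exact ⟨s, by simp [edge_adj, hst.symm], by simp +contextual [edge_adj, hst.symm]⟩
  · rw [degree_eq_zero, IsIsolated]
    simp only [edge_adj]
    grind

theorem degree_eq_of_eq_sup_edge {H K : SimpleGraph V} [Fintype (H.neighborSet z)]
    [Fintype (K.neighborSet z)] (hK : K = H ⊔ edge s t) (hne : s ≠ t) (hst : ¬ H.Adj s t) :
    K.degree z = H.degree z + if z = s ∨ z = t then 1 else 0 := by
  subst hK
  have := Set.fintypeSubset (s := (H ⊔ edge s t).neighborSet z) (t := (edge s t).neighborSet z)
    fun x hx => Or.inr hx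
  rw [← card_neighborFinset_eq_degree,
    neighborFinset_sup_of_disjoint _ ((disjoint_edge _).2 hst), Finset.card_disjUnion,
    card_neighborFinset_eq_degree, card_neighborFinset_eq_degree, degree_edge hne]

theorem degree_swapEdge_add [Fintype V] (hac : T.Adj a c) (hs : s ∈ edgeSide T a c)
    (ht : t ∉ edgeSide T a c) :
    (swapEdge T a c s t).degree z + (if z = a ∨ z = c then 1 else 0) =
      T.degree z + if z = s ∨ z = t then 1 else 0 := by
  have hst : ¬ (T.deleteEdges {s(a, c)}).Adj s t := fun h => ht (hs.trans h.reachable)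
  have hrestore : T = T.deleteEdges {s(a, c)} ⊔ edge a c := by
    rw [deleteEdges, edge, sdiff_sup_cancel]
    exact (edge_le_iff T).2 (Or.inr hac)
  rw [degree_eq_of_eq_sup_edge hrestore hac.ne (by simp),
    degree_eq_of_eq_sup_edge (K := swapEdge T a c s t) rfl (ne_of_mem_of_not_mem hs ht) hst]
  omega

theorem ncard_neighborSet_toSubgraph_of_mem_support {p : T.Walk u v} (hp : p.IsPath)
    (hx : x ∈ p.support) (hxu : x ≠ u) (hxv : x ≠ v) :
    (p.toSubgraph.neighborSet x).ncard = 2 := by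
  obtain ⟨i, rfl, hi⟩ := Walk.mem_support_iff_exists_getVert.1 hx
  refine hp.ncard_neighborSet_toSubgraph_internal_eq_two ?_ (hi.lt_of_ne ?_)
  · rintro rfl
    exact hxu p.getVert_zero
  · rintro rfl
    exact hxv p.getVert_length

theorem exists_mem_support_three_le_degree_of_notMem [Fintype V] (hT : T.Connected)
    {p : T.Walk u v} (hp : p.IsPath) (huv : u ≠ v) (hu : T.degree u = 1)
    (hv : T.degree v = 1) (hz : z ∉ p.support) : ∃ b ∈ p.support, 3 ≤ T.degree b := by
  have hnil : ¬ p.Nil := fun h => huv h.eq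
  obtain ⟨q⟩ := hT.preconnected u z
  obtain ⟨⟨⟨b, x⟩, hbx⟩, -, hb, hx⟩ :=
    q.exists_boundary_dart {x | x ∈ p.support} p.start_mem_support hz
  have hlt : (p.toSubgraph.neighborSet b).ncard < T.degree b := by
    rw [← card_neighborSet_eq_degree, ← Nat.card_eq_fintype_card]
    refine Set.ncard_lt_ncard ((Set.ssubset_iff_of_subset
      (p.toSubgraph.neighborSet_subset _)).2 ⟨x, hbx, fun h => hx ?_⟩)
    exact p.mem_verts_toSubgraph.1 (p.toSubgraph.edge_vert h.symm)
  by_cases hbu : b = u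
  · rw [hbu, hp.neighborSet_toSubgraph_startpoint hnil, Set.ncard_singleton, hu] at hlt
    omega
  by_cases hbv : b = v
  · rw [hbv, hp.neighborSet_toSubgraph_endpoint hnil, Set.ncard_singleton, hv] at hlt
    omega
  rw [ncard_neighborSet_toSubgraph_of_mem_support hp hb hbu hbv] at hlt
  exact ⟨b, hb, hlt⟩

theorem exists_mem_support_three_le_degree [Fintype V] (hT : T.Connected) {p : T.Walk u v}
    (hp : p.IsPath) (huv : u ≠ v) (hu : T.degree u = 1) (hv : T.degree v = 1)
    (hzu : z ≠ u) (hzv : z ≠ v) (hz : T.degree z ≠ 2) :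
    ∃ b ∈ p.support, 3 ≤ T.degree b := by
  by_cases hzp : z ∈ p.support
  · have hle : (p.toSubgraph.neighborSet z).ncard ≤ T.degree z := by
      rw [← card_neighborSet_eq_degree, ← Nat.card_eq_fintype_card]
      exact Set.ncard_le_ncard (p.toSubgraph.neighborSet_subset _)
    rw [ncard_neighborSet_toSubgraph_of_mem_support hp hzp hzu hzv] at hle
    exact ⟨z, hzp, by omega⟩
  · exact exists_mem_support_three_le_degree_of_notMem hT hp huv hu hv hzp

end Degree

/-- The vertices of `T` of degree other than two. In a tree on at least two vertices these are the
leaves and the branch vertices. -/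
noncomputable def essentialVerts [Fintype V] (T : SimpleGraph V) : Finset V :=
  Finset.univ.filter fun v => T.degree v ≠ 2

/-- `T` is a spanning tree of `G` having the fewest vertices of degree other than two. -/
structure IsOptimalTree [Fintype V] (G T : SimpleGraph V) : Prop where
  isTree : T.IsTree
  le : T ≤ G
  card_le : ∀ T' : SimpleGraph V, T'.IsTree → T' ≤ G →
    (essentialVerts T).card ≤ (essentialVerts T').card

/-- The exchange of the edge `ac` of `T` for the edge `st` of `G` joins the leaf `s`, which lies
on the side of `a`, to the side of `c`, in such a way that neither `c` nor `t` can become a new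
vertex of degree other than two. -/
structure IsLeafExchange [Fintype V] (G T : SimpleGraph V) (a c s t : V) : Prop where
  adj : T.Adj a c
  adj_new : G.Adj s t
  mem_side : s ∈ edgeSide T a c
  notMem_side : t ∉ edgeSide T a c
  degree_eq_one : T.degree s = 1
  attach : t = c ∨ 3 ≤ T.degree c ∧ T.degree t ≠ 2

section Exchange

variable [Fintype V] {G T T' : SimpleGraph V} {a c p s t u v w x : V}

theorem mem_essentialVerts : v ∈ essentialVerts T ↔ T.degree v ≠ 2 := by
  simp [essentialVerts]

theorem card_leafSet_add_card_branchSet_le :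
    (leafSet T).card + (branchSet T).card ≤ (essentialVerts T).card := by
  have hdisj : _root_.Disjoint (leafSet T) (branchSet T) :=
    Finset.disjoint_filter.2 fun _ _ h => by omega
  rw [← Finset.card_union_of_disjoint hdisj]
  refine Finset.card_le_card fun v hv => mem_essentialVerts.2 ?_
  simp only [leafSet, branchSet, Finset.mem_union, Finset.mem_filter_univ] at hv
  omega

theorem exists_isOptimalTree (hG : G.Connected) : ∃ T, IsOptimalTree G T := by
  obtain ⟨T₀, hle, hT₀⟩ := hG.exists_isTree_le
  obtain ⟨T, ⟨hT, hTG⟩, hmin⟩ := exists_minimalFor_of_wellFoundedLT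
    (fun T : SimpleGraph V => T.IsTree ∧ T ≤ G) (fun T => (essentialVerts T).card) ⟨T₀, hT₀, hle⟩
  exact ⟨T, hT, hTG, fun T' hT' hT'G => (le_total _ _).elim id (hmin ⟨hT', hT'G⟩)⟩

theorem IsOptimalTree.card_eq (hT : IsOptimalTree G T) (hT' : IsOptimalTree G T') :
    (essentialVerts T).card = (essentialVerts T').card :=
  (hT.card_le T' hT'.isTree hT'.le).antisymm (hT'.card_le T hT.isTree hT.le)

theorem IsLeafExchange.essentialVerts_subset (h : IsLeafExchange G T a c s t) (hT : T.IsTree) :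
    essentialVerts (swapEdge T a c s t) ⊆ insert a ((essentialVerts T).erase s) := by
  intro z hz
  have hdegree := degree_swapEdge_add (z := z) h.adj h.mem_side h.notMem_side
  have hsc : s ≠ c := ne_of_mem_of_not_mem h.mem_side (notMem_edgeSide hT h.adj)
  have hs := h.degree_eq_one
  have hattach := h.attach
  rw [Finset.mem_insert, Finset.mem_erase, mem_essentialVerts]
  rw [mem_essentialVerts] at hz
  grind

theorem IsLeafExchange.leaf_mem_essentialVerts (h : IsLeafExchange G T a c s t) :
    s ∈ essentialVerts T := by
  simp [mem_essentialVerts, h.degree_eq_one]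

theorem IsLeafExchange.card_insert_erase_le (h : IsLeafExchange G T a c s t) :
    (insert a ((essentialVerts T).erase s)).card ≤ (essentialVerts T).card :=
  (Finset.card_insert_le _ _).trans (Finset.card_erase_add_one h.leaf_mem_essentialVerts).le

theorem IsLeafExchange.isOptimalTree_swapEdge (h : IsLeafExchange G T a c s t)
    (hT : IsOptimalTree G T) : IsOptimalTree G (swapEdge T a c s t) where
  isTree := isTree_swapEdge hT.isTree h.adj h.mem_side h.notMem_side
  le := swapEdge_le hT.le h.adj_new
  card_le T' hT' hT'G :=
    calc (essentialVerts (swapEdge T a c s t)).card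
        ≤ (insert a ((essentialVerts T).erase s)).card :=
          Finset.card_le_card (h.essentialVerts_subset hT.isTree)
      _ ≤ (essentialVerts T).card := h.card_insert_erase_le
      _ ≤ (essentialVerts T').card := hT.card_le T' hT' hT'G

theorem IsLeafExchange.essentialVerts_swapEdge (h : IsLeafExchange G T a c s t)
    (hT : IsOptimalTree G T) :
    essentialVerts (swapEdge T a c s t) = insert a ((essentialVerts T).erase s) :=
  Finset.eq_of_subset_of_card_le (h.essentialVerts_subset hT.isTree)
    (h.card_insert_erase_le.trans (hT.card_eq (h.isOptimalTree_swapEdge hT)).le)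

theorem IsLeafExchange.notMem_erase (h : IsLeafExchange G T a c s t)
    (hT : IsOptimalTree G T) : a ∉ (essentialVerts T).erase s := by
  intro ha
  have hcard := hT.card_eq (h.isOptimalTree_swapEdge hT)
  rw [h.essentialVerts_swapEdge hT, Finset.insert_eq_of_mem ha] at hcard
  exact (Finset.card_erase_lt_of_mem h.leaf_mem_essentialVerts).ne' hcard

theorem exists_adj_three_le_degree_between (hT : T.IsTree)
    (hcard : 3 ≤ (essentialVerts T).card) (huv : u ≠ v) (hu : T.degree u = 1)
    (hv : T.degree v = 1) :
    ∃ y b, T.Adj y b ∧ 3 ≤ T.degree b ∧ u ∈ edgeSide T y b ∧ v ∉ edgeSide T y b := by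
  obtain ⟨p, hp⟩ := hT.connected.exists_isPath u v
  obtain ⟨z, hz, hzuv⟩ := Finset.exists_mem_notMem_of_card_lt_card
    (Finset.card_le_two.trans_lt hcard : ({u, v} : Finset V).card < _)
  simp only [Finset.mem_insert, Finset.mem_singleton, not_or] at hzuv
  obtain ⟨b, hbp, hb⟩ := exists_mem_support_three_le_degree hT.connected hp huv hu hv
    hzuv.1 hzuv.2 (mem_essentialVerts.1 hz)
  obtain ⟨y, hby, huy⟩ := exists_adj_notMem_edgeSide hT (w := b) (u := u) (by grind)
  have huy' := (mem_edgeSide_swap_iff hT hby).2 huy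
  refine ⟨y, b, hby.symm, hb, huy', fun hvy => notMem_edgeSide hT hby.symm ?_⟩
  exact huy'.trans (reachable_of_mem_support_isPath hT.isAcyclic (deleteEdges_le _) hp hbp
    (Reachable.trans huy'.symm hvy))

theorem IsOptimalTree.not_adj_of_degree_eq_one (hT : IsOptimalTree G T)
    (hcard : 3 ≤ (essentialVerts T).card) (huv : u ≠ v) (hu : T.degree u = 1)
    (hv : T.degree v = 1) : ¬ G.Adj u v := by
  intro hadj
  obtain ⟨y, b, hyb, hb, huy, hvy⟩ :=
    exists_adj_three_le_degree_between hT.isTree hcard huv hu hv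
  have hex : IsLeafExchange G T y b u v := ⟨hyb, hadj, huy, hvy, hu, Or.inr ⟨hb, by omega⟩⟩
  have hmem : v ∈ essentialVerts (swapEdge T y b u v) := by
    rw [hex.essentialVerts_swapEdge hT]
    simp [mem_essentialVerts, huv.symm, hv]
  have hdegree := degree_swapEdge_add (z := v) hyb huy hvy
  rw [mem_essentialVerts] at hmem
  have hvy' : v ≠ y := (ne_of_mem_of_not_mem mem_edgeSide_self hvy).symm
  grind

theorem isLeafExchange_parent (hT : T.IsTree) (hu : T.degree u = 1)
    (huw : G.Adj u w) (hwp : T.Adj w p) (hp : u ∉ edgeSide T w p) :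
    IsLeafExchange G T p w u w where
  adj := hwp.symm
  adj_new := huw
  mem_side := (mem_edgeSide_swap_iff hT hwp).2 hp
  notMem_side := notMem_edgeSide hT hwp.symm
  degree_eq_one := hu
  attach := Or.inl rfl

theorem IsOptimalTree.degree_parent (hT : IsOptimalTree G T) (hu : T.degree u = 1)
    (huw : G.Adj u w) (hwp : T.Adj w p) (hp : u ∉ edgeSide T w p) :
    p = u ∨ T.degree p = 2 := by
  have hnot := (isLeafExchange_parent hT.isTree hu huw hwp hp).notMem_erase hT
  rw [Finset.mem_erase, mem_essentialVerts] at hnot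
  tauto

theorem IsOptimalTree.not_adj_parent (hT : IsOptimalTree G T)
    (hcard : 3 ≤ (essentialVerts T).card) (hu : T.degree u = 1) (hv : T.degree v = 1)
    (hvu : v ≠ u) (huw : G.Adj u w) (hwp : T.Adj w p) (hp : u ∉ edgeSide T w p) :
    ¬ G.Adj v p := by
  have hex := isLeafExchange_parent hT.isTree hu huw hwp hp
  have hT' := hex.isOptimalTree_swapEdge hT
  have hdegree (z : V) :=
    degree_swapEdge_add (z := z) hex.adj hex.mem_side hex.notMem_side
  have hpu := hT.degree_parent hu huw hwp hp
  have hvp : v ≠ p := by grind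
  have hp' : (swapEdge T p w u w).degree p = 1 := by
    have := hdegree p
    have := hwp.ne
    grind
  have hv' : (swapEdge T p w u w).degree v = 1 := by
    have := hdegree v
    grind
  exact hT'.not_adj_of_degree_eq_one (hT.card_eq hT' ▸ hcard) hvp hv' hp'

theorem IsOptimalTree.eq_of_parent_eq (hT : IsOptimalTree G T) (hu : T.degree u = 1)
    (huw : G.Adj u w) (hwp : T.Adj w p) (hxp : T.Adj x p) (hw : u ∉ edgeSide T w p)
    (hx : u ∉ edgeSide T x p) : w = x := by
  by_contra hwx
  have hpair : ({w, x} : Finset V) ⊆ T.neighborFinset p := by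
    simp [Finset.insert_subset_iff, hwp.symm, hxp.symm]
  have hdegree : 2 ≤ T.degree p := by
    simpa [Finset.card_pair hwx] using Finset.card_le_card hpair
  have hpu : p ≠ u := by
    rintro rfl
    omega
  obtain ⟨q, hpq, hq⟩ := exists_adj_notMem_edgeSide hT.isTree hpu
  have hne {z : V} (hzp : T.Adj z p) (hz : u ∉ edgeSide T z p) : q ≠ z := by
    rintro rfl
    exact hz ((mem_edgeSide_swap_iff hT.isTree hpq).2 hq)
  have htriple : insert q {w, x} ⊆ T.neighborFinset p :=
    Finset.insert_subset ((mem_neighborFinset ..).2 hpq) hpair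
  have hlt : 3 ≤ T.degree p := by
    simpa [Finset.card_insert_of_notMem, hwx, hne hwp hw, hne hxp hx]
      using Finset.card_le_card htriple
  have := hT.degree_parent hu huw hwp hw
  grind

-- `A` consists of the tree neighbours, in the direction of `u`, of the vertices of `N_G(u)`.
theorem IsOptimalTree.exists_shift_neighborFinset (hT : IsOptimalTree G T)
    (hcard : 3 ≤ (essentialVerts T).card) (hu : T.degree u = 1) :
    ∃ A : Finset V, A.card = G.degree u ∧ (∀ p ∈ A, p = u ∨ T.degree p = 2) ∧
      ∀ p ∈ A, ∀ v, T.degree v = 1 → v ≠ u → ¬ G.Adj v p := by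
  have hparent (w : V) (hw : w ∈ G.neighborFinset u) : ∃ p, T.Adj w p ∧ u ∉ edgeSide T w p :=
    exists_adj_notMem_edgeSide hT.isTree ((mem_neighborFinset ..).1 hw).ne'
  choose! f hadj hside using hparent
  simp only [mem_neighborFinset] at hadj hside
  refine ⟨(G.neighborFinset u).image f, ?_, ?_, ?_⟩
  · rw [Finset.card_image_of_injOn, card_neighborFinset_eq_degree]
    intro w hw w' hw' hff
    simp only [coe_neighborFinset, mem_neighborSet] at hw hw'
    exact hT.eq_of_parent_eq hu hw (hadj w hw) (hff ▸ hadj w' hw') (hside w hw)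
      (hff ▸ hside w' hw')
  · simp only [Finset.forall_mem_image, mem_neighborFinset]
    exact fun w hw => hT.degree_parent hu hw (hadj w hw) (hside w hw)
  · simp only [Finset.forall_mem_image, mem_neighborFinset]
    exact fun w hw v hv hvu => hT.not_adj_parent hcard hu hv hvu hw (hadj w hw) (hside w hw)

end Exchange

/-- The dart `bc` of the optimal tree `T` starts at a branch vertex `b`. -/
structure IsBranchDart [Fintype V] (G T : SimpleGraph V) (b c : V) : Prop where
  isOptimalTree : IsOptimalTree G T
  adj : T.Adj b c
  three_le_degree : 3 ≤ T.degree b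

/-- A branch dart whose side `edgeSide T b c` is minimal among the branch darts of all optimal
trees of `G`, not only those of `T`. -/
structure IsMinimalBranchDart [Fintype V] (G T : SimpleGraph V) (b c : V) : Prop
    extends IsBranchDart G T b c where
  minimal : ∀ T' b' c', IsBranchDart G T' b' c' → ¬ edgeSide T' b' c' ⊂ edgeSide T b c

section MinimalSide

variable [Fintype V] {G T : SimpleGraph V} {b c v w y z : V}

theorem exists_degree_eq_one_mem_edgeSide (hT : T.IsTree) (hyb : T.Adj y b) :
    ∃ v ∈ edgeSide T y b, T.degree v = 1 := by
  induction hS : edgeSide T y b using WellFoundedLT.induction generalizing y b with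
  | ind S ih =>
    subst hS
    by_cases hy : T.degree y = 1
    · exact ⟨y, mem_edgeSide_self, hy⟩
    · obtain ⟨x, hyx, hxb⟩ : ∃ x, T.Adj y x ∧ x ≠ b := by
        by_contra! hall
        exact hy (degree_eq_one_iff_existsUnique_adj.2 ⟨b, hyb, hall⟩)
      have hlt := edgeSide_ssubset_of_adj hT hyx hxb
      obtain ⟨v, hv, hv1⟩ := ih _ hlt hyx.symm rfl
      exact ⟨v, hlt.subset hv, hv1⟩

theorem exists_isBranchDart (hT : IsOptimalTree G T) (hcard : 3 ≤ (essentialVerts T).card) :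
    ∃ b c, IsBranchDart G T b c := by
  have : Nontrivial V := Fintype.one_lt_card_iff_nontrivial.1
    (by have := (essentialVerts T).card_le_univ; omega)
  obtain ⟨u, v, huv, hu, hv⟩ := hT.isTree.exists_ne_and_degree_eq_one
  obtain ⟨y, b, hyb, hb, -⟩ := exists_adj_three_le_degree_between hT.isTree hcard huv hu hv
  exact ⟨b, y, hT, hyb.symm, hb⟩

theorem exists_isMinimalBranchDart (h : IsBranchDart G T b c) :
    ∃ T b c, IsMinimalBranchDart G T b c := by
  obtain ⟨⟨T, b, c⟩, h, hmin⟩ := exists_minimalFor_of_wellFoundedLT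
    (fun d : SimpleGraph V × V × V => IsBranchDart G d.1 d.2.1 d.2.2)
    (fun d => edgeSide d.1 d.2.1 d.2.2) ⟨⟨T, b, c⟩, h⟩
  exact ⟨T, b, c, h, fun T' b' c' h' hlt =>
    hlt.not_subset (hmin (j := (T', b', c')) h' hlt.subset)⟩

theorem IsMinimalBranchDart.eq_of_three_le_degree (h : IsMinimalBranchDart G T b c)
    (hz : z ∈ edgeSide T b c) (hdegree : 3 ≤ T.degree z) : z = b := by
  by_contra hzb
  obtain ⟨p, hzp, hb⟩ := exists_adj_notMem_edgeSide h.isOptimalTree.isTree hzb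
  exact h.minimal T z p ⟨h.isOptimalTree, hzp, hdegree⟩ (edgeSide_ssubset_of_mem hz hb)

theorem IsMinimalBranchDart.eq_of_adj (h : IsMinimalBranchDart G T b c)
    (hyb : T.Adj y b) (hyc : y ≠ c) (hv : T.degree v = 1) (hvy : v ∈ edgeSide T y b)
    (hvw : G.Adj v w) (hw : 3 ≤ T.degree w) : w = b := by
  have hT := h.isOptimalTree
  refine h.eq_of_three_le_degree (by_contra fun hwc => ?_) hw
  have hwy : w ∉ edgeSide T y b := fun hwy =>
    hwc ((edgeSide_ssubset_of_adj hT.isTree hyb.symm hyc).subset hwy)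
  have hex : IsLeafExchange G T y b v w :=
    ⟨hyb, hvw, hvy, hwy, hv, Or.inr ⟨h.three_le_degree, by omega⟩⟩
  have hbc : (swapEdge T y b v w).Adj b c := by
    refine Or.inl ?_
    simp [h.adj, hyc.symm, h.adj.ne']
  have hb : (swapEdge T y b v w).degree b ≠ 2 := by
    have hbT := h.three_le_degree
    rw [← mem_essentialVerts, hex.essentialVerts_swapEdge hT, Finset.mem_insert,
      Finset.mem_erase, mem_essentialVerts]
    grind
  have hdegree := degree_swapEdge_add (z := b) hyb hvy hwy
  have hbT := h.three_le_degree
  refine h.minimal _ b c ⟨hex.isOptimalTree_swapEdge hT, hbc, ?_⟩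
    (edgeSide_swapEdge_ssubset hT.isTree hyb hyc hvy hwc)
  grind

theorem IsMinimalBranchDart.exists_leaves (h : IsMinimalBranchDart G T b c) :
    ∃ u v, u ≠ v ∧ T.degree u = 1 ∧ T.degree v = 1 ∧
      ∀ w, G.Adj v w → 3 ≤ T.degree w → w = b := by
  have hT := h.isOptimalTree.isTree
  have hcard : 1 < (T.neighborFinset b).card := by
    rw [card_neighborFinset_eq_degree]
    exact (Nat.lt_succ_self 1).trans h.three_le_degree
  obtain ⟨y, hy, hyc⟩ := Finset.exists_mem_ne hcard c
  have hyb : T.Adj y b := ((mem_neighborFinset ..).1 hy).symm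
  obtain ⟨u, hub, hu⟩ := exists_degree_eq_one_mem_edgeSide hT h.adj.symm
  obtain ⟨v, hvy, hv⟩ := exists_degree_eq_one_mem_edgeSide hT hyb
  have hvb := (edgeSide_ssubset_of_adj hT hyb.symm hyc).subset hvy
  have huv : v ≠ u := ne_of_mem_of_not_mem hvb ((mem_edgeSide_swap_iff hT h.adj).1 hub)
  exact ⟨u, v, huv.symm, hu, hv, fun w => h.eq_of_adj hyb hyc hv hvy⟩

end MinimalSide

section Count

variable [Fintype V] {G T : SimpleGraph V} {b u v : V}

theorem IsOptimalTree.degree_add_degree_add_card_le (hT : IsOptimalTree G T)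
    (hcard : 3 ≤ (essentialVerts T).card) (hu : T.degree u = 1) (hv : T.degree v = 1)
    (huv : u ≠ v) (hb : ∀ w, G.Adj v w → 3 ≤ T.degree w → w = b) :
    G.degree u + G.degree v + (essentialVerts T).card ≤ Fintype.card V + 2 := by
  obtain ⟨A, hA, hAdegree, hAadj⟩ := hT.exists_shift_neighborFinset hcard hu
  have hdisj : _root_.Disjoint A (G.neighborFinset v) :=
    Finset.disjoint_left.2 fun p hp hpv =>
      hAadj p hp v hv huv.symm ((mem_neighborFinset ..).1 hpv)
  have : Nontrivial V := ⟨u, v, huv⟩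
  have hsub : A ∪ G.neighborFinset v ⊆ insert u (insert b (essentialVerts T)ᶜ) := by
    intro p hp
    simp only [Finset.mem_insert, Finset.mem_compl, mem_essentialVerts, not_not]
    rcases Finset.mem_union.1 hp with hp | hp
    · exact (hAdegree p hp).imp_right Or.inr
    · have hvp := (mem_neighborFinset ..).1 hp
      have hpos := hT.isTree.connected.preconnected.degree_pos_of_nontrivial p
      have hone : T.degree p ≠ 1 := fun hp1 =>
        hT.not_adj_of_degree_eq_one hcard hvp.ne hv hp1 hvp
      by_cases hp3 : 3 ≤ T.degree p
      · exact Or.inr (Or.inl (hb p hvp hp3))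
      · exact Or.inr (Or.inr (by omega))
  calc G.degree u + G.degree v + (essentialVerts T).card
      = (A ∪ G.neighborFinset v).card + (essentialVerts T).card := by
        rw [Finset.card_union_of_disjoint hdisj, hA, card_neighborFinset_eq_degree]
    _ ≤ (essentialVerts T)ᶜ.card + 2 + (essentialVerts T).card := by
        gcongr
        exact (Finset.card_le_card hsub).trans ((Finset.card_insert_le _ _).trans
          (Nat.succ_le_succ (Finset.card_insert_le _ _)))
    _ = Fintype.card V + 2 := by
        rw [← (essentialVerts T).card_compl_add_card]
        omega

end Count

theorem stmt1_general {V : Type*} [Fintype V] (k : ℕ) (G : SimpleGraph V) (hG : G.Connected)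
    (hσ : ∀ u v : V, u ≠ v → ¬ G.Adj u v →
      Fintype.card V - k ≤ G.degree u + G.degree v) :
    ∃ T : SimpleGraph V, T ≤ G ∧ T.IsTree ∧
      (leafSet T).card + (branchSet T).card ≤ k + 2 := by
  obtain ⟨T₀, hT₀⟩ := exists_isOptimalTree hG
  refine ⟨T₀, hT₀.le, hT₀.isTree, card_leafSet_add_card_branchSet_le.trans ?_⟩
  by_contra! hlt
  obtain ⟨b₀, c₀, h₀⟩ := exists_isBranchDart hT₀ (by omega)
  obtain ⟨T, b, c, h⟩ := exists_isMinimalBranchDart h₀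
  obtain ⟨u, v, huv, hu, hv, hb⟩ := h.exists_leaves
  have hcard := hT₀.card_eq h.isOptimalTree
  have hle := h.isOptimalTree.degree_add_degree_add_card_le (by omega) hu hv huv hb
  have hnadj := h.isOptimalTree.not_adj_of_degree_eq_one (by omega) huv hu hv
  have hsum := hσ u v huv hnadj
  have := (essentialVerts T).card_le_univ
  omega

/-- If `k ≥ 1` and `G` is a connected `K_{1,4}`-free graph of order `n` in which
every pair of non-adjacent vertices has degree sum at least `n - k`, then `G` has a spanning
tree with at most `k+2` leaves and branch vertices in total. -/
theorem stmt1 {V : Type*} [Fintype V] (k : ℕ) (hk : 1 ≤ k)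
    (G : SimpleGraph V) (hG : G.Connected) (hK : K14Free G)
    (hσ : ∀ u v : V, u ≠ v → ¬G.Adj u v →
      Fintype.card V - k ≤ G.degree u + G.degree v) :
    ∃ T : SimpleGraph V, T ≤ G ∧ T.IsTree ∧
      (leafSet T).card + (branchSet T).card ≤ k + 2 :=
  stmt1_general k G hG hσ
end
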